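/- Let n ≥ 2, let n−1 < s ≤ n, and let A ⊆ ℝⁿ be a Borel set with 0 < H^s(A) < ∞. Then there is a Borel set B ⊆ ℝⁿ with dimH B ≤ n−1 such that for every x ∈ ℝⁿ \ B, the set of unit vectors e ∈ S^{n−1} for which dimH( A ∩ { x + r·e : r ∈ ℝ } ) = s − (n−1) has positive (n−1)-dimensional Hausdorff measure in S^{n−1}. -/

import Mathlib

open MeasureTheory Metric Set
open scoped ENNReal RealInnerProductSpace

/-!
Write `n = m + 1` and `ℝⁿ = ℝᵐ × ℝ`. The lines of slope `u` are the fibres of `projAlong u`, and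
`lineSlope` is a locally Lipschitz chart from the non-horizontal directions to the slopes, so it
suffices to find, for typical `x`, a set of slopes `u` of positive Lebesgue measure.

Let `μ` be the restriction of `μH[s]` to a compact subset of `A` on which Frostman's condition
holds. Mollifying the image of `μ` under `projAlong u` at scale `2⁻ᵏ` gives densities
`lineDensity μ k (u, v)` along the lines of slope `u`. By transversality, `‖projAlong u w‖ ≤ ρ`
only for a set of slopes of measure `O((ρ / ‖w‖) ^ m)`; hence the inner products of these
densities converge to a Riesz energy of `μ` of order `m < s`, and the densities are Cauchy in
`L²`. Pairing the tubes around a point `x` with a discrete Frostman measure shows that a function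
on the space of lines which is small in `L²` is small on average over the lines through `x`,
unless `x` is in a set of small `t`-dimensional content, `t > m`. So off a set of dimension at
most `m`, it is not the case that the densities tend to zero along almost every line through `x`.

Where the densities do not vanish, the section carries mass in the limit. For `τ < s - m` the
energies of order `τ` along almost every line through a typical `x` are finite, so the section has
dimension at least `s - m`. The opposite inequality holds for almost every line through any `x`,
since a generic fibre of a locally Lipschitz map to `ℝᵐ` loses `m` dimensions.
-/

namespace LineSections

open Filter Topology TopologicalSpace
open scoped NNReal

section HausdorffContent
variable {X : Type*}

/-- The `t`-dimensional Hausdorff content: the infimum of `∑ diam ^ t` over countable covers by sets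
of arbitrary diameter. -/
noncomputable def hausdorffContent (X : Type*) [PseudoEMetricSpace X] (t : ℝ) : OuterMeasure X :=
  OuterMeasure.boundedBy fun S => ediam S ^ t

lemma ediam_closedBall_le [PseudoMetricSpace X] (x : X) (r : ℝ) :
    ediam (closedBall x r) ≤ 2 * ENNReal.ofReal r := by
  rcases le_or_gt 0 r with hr | hr
  · rw [← closedEBall_ofReal hr]
    exact ediam_closedEBall_le
  · simp [closedBall_eq_empty.2 hr]

lemma hausdorffContent_closedBall_le [PseudoMetricSpace X] {t : ℝ} (ht : 0 ≤ t) (x : X) (r : ℝ) :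
    hausdorffContent X t (closedBall x r) ≤ (2 * ENNReal.ofReal r) ^ t :=
  (OuterMeasure.boundedBy_le _).trans (by gcongr; exact ediam_closedBall_le x r)

lemma exists_tsum_ediam_rpow_lt [PseudoEMetricSpace X] {t : ℝ} (ht : 0 < t) {S : Set X}
    {ε : ℝ≥0∞} (hS : hausdorffContent X t S < ε) :
    ∃ T : ℕ → Set X, S ⊆ iUnion T ∧ ∑' i, ediam (T i) ^ t < ε := by
  rw [hausdorffContent, OuterMeasure.boundedBy_apply] at hS
  simp only [iInf_lt_iff] at hS
  obtain ⟨T, hST, hT⟩ := hS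
  refine ⟨T, hST, (ENNReal.tsum_le_tsum fun i => ?_).trans_lt hT⟩
  rcases (T i).eq_empty_or_nonempty with h | h
  · simp [h, ht]
  · simp [h]

lemma hausdorffMeasure_eq_zero_of_hausdorffContent_eq_zero [EMetricSpace X] [MeasurableSpace X]
    [BorelSpace X] {t : ℝ} (ht : 0 < t) {S : Set X} (hS : hausdorffContent X t S = 0) :
    μH[t] S = 0 := by
  have hcover (n : ℕ) : ∃ T : ℕ → Set X, S ⊆ iUnion T ∧ ∑' i, ediam (T i) ^ t < (n : ℝ≥0∞)⁻¹ :=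
    exists_tsum_ediam_rpow_lt ht (by rw [hS]; simp)
  choose T hST hT using hcover
  have hr : Tendsto (fun n : ℕ => (n : ℝ≥0∞)⁻¹ ^ t⁻¹) atTop (𝓝 0) := by
    have := ((ENNReal.continuous_rpow_const (y := t⁻¹)).tendsto 0).comp
      ENNReal.tendsto_inv_nat_nhds_zero
    simpa only [Function.comp_def, ENNReal.zero_rpow_of_pos (inv_pos.2 ht)] using this
  have hdiam (n i : ℕ) : ediam (T n i) ≤ (n : ℝ≥0∞)⁻¹ ^ t⁻¹ :=
    (ENNReal.le_rpow_inv_iff ht).2 ((ENNReal.le_tsum i).trans (hT n).le)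
  refine nonpos_iff_eq_zero.1 ((Measure.hausdorffMeasure_le_liminf_tsum t S _ hr T
    (Eventually.of_forall hdiam) (Eventually.of_forall hST)).trans ?_)
  calc liminf (fun n => ∑' i, ediam (T n i) ^ t) atTop
      ≤ liminf (fun n : ℕ => (n : ℝ≥0∞)⁻¹) atTop :=
        liminf_le_liminf (Eventually.of_forall fun n => (hT n).le)
    _ = 0 := ENNReal.tendsto_inv_nat_nhds_zero.liminf_eq

end HausdorffContent

section Frostman
variable {X : Type*}

/-- Frostman's condition with exponent `s`: the measure of a ball of radius `r` is `O(r ^ s)`,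
uniformly in the centre. -/
def IsFrostman [PseudoMetricSpace X] [MeasurableSpace X] (μ : Measure X) (s : ℝ) : Prop :=
  ∃ C : ℝ≥0∞, C ≠ ∞ ∧ ∀ (y : X) (r : ℝ), 0 < r → μ (closedBall y r) ≤ C * ENNReal.ofReal r ^ s

lemma exists_countable_cover_closedBall_tsum_measure_ball_le [PseudoMetricSpace X]
    [SeparableSpace X] [MeasurableSpace X] [OpensMeasurableSpace X] (ν : Measure X) {G : Set X}
    {δ : ℝ} {P : X → ℝ → Prop} (hP : ∀ y ∈ G, ∃ r, 0 < r ∧ r < δ ∧ P y r) :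
    ∃ u : Set X, u.Countable ∧ ∃ r : X → ℝ, (∀ y ∈ u, r y < δ ∧ P y (r y)) ∧
      G ⊆ ⋃ y : u, closedBall (y : X) (6 * r y) ∧ ∑' y : u, ν (ball (y : X) (r y)) ≤ ν univ := by
  choose! r hr_pos hr_lt hr using hP
  obtain ⟨u, huG, hdisj, hcov⟩ := Vitali.exists_disjoint_subfamily_covering_enlargement_closedBall
    G id r δ (fun a ha => (hr_lt a ha).le) 6 (by norm_num)
  have hdisj' : u.PairwiseDisjoint fun a => ball a (r a) :=
    hdisj.mono fun a => ball_subset_closedBall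
  have hu : u.Countable := hdisj'.countable_of_isOpen (fun _ _ => isOpen_ball)
    (fun a ha => ⟨a, mem_ball_self (hr_pos a (huG ha))⟩)
  have := hu.to_subtype
  refine ⟨u, hu, r, fun y hy => ⟨hr_lt y (huG hy), hr y (huG hy)⟩, fun y hy => ?_, ?_⟩
  · obtain ⟨b, hb, hsub⟩ := hcov y hy
    exact mem_iUnion.2 ⟨⟨b, hb⟩, hsub (mem_closedBall_self (hr_pos y hy).le)⟩
  · rw [← measure_iUnion (f := fun y : u => ball (y : X) (r y))
      (fun a b hab => hdisj' a.2 b.2 (Subtype.coe_ne_coe.2 hab)) fun _ => measurableSet_ball]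
    exact measure_mono (subset_univ _)

lemma hausdorffMeasure_frequently_lt_measure_ball_le [MetricSpace X] [SeparableSpace X]
    [MeasurableSpace X] [BorelSpace X] {s : ℝ} (hs : 0 ≤ s) (ν : Measure X) {c : ℝ≥0∞}
    (hc : c ≠ 0) (hc' : c ≠ ∞) :
    μH[s] {y | ∃ᶠ r in 𝓝[>] (0 : ℝ), c * (12 * ENNReal.ofReal r) ^ s < ν (ball y r)} ≤
      ν univ / c := by
  set G := {y | ∃ᶠ r in 𝓝[>] (0 : ℝ), c * (12 * ENNReal.ofReal r) ^ s < ν (ball y r)}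
  have hG (n : ℕ) (y : X) (hy : y ∈ G) : ∃ r, 0 < r ∧ r < 1 / ((n : ℝ) + 1) ∧
      c * (12 * ENNReal.ofReal r) ^ s < ν (ball y r) := by
    obtain ⟨r, ⟨hr_pos, hr_lt⟩, hr⟩ :=
      (nhdsGT_basis (0 : ℝ)).frequently_iff.1 hy _ (Nat.one_div_pos_of_nat (n := n))
    exact ⟨r, hr_pos, hr_lt, hr⟩
  choose u hu r hr hcov hsum using
    fun n => exists_countable_cover_closedBall_tsum_measure_ball_le ν (hG n)
  have (n : ℕ) : Countable (u n) := (hu n).to_subtype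
  have hdiam (n : ℕ) (y : u n) :
      ediam (closedBall (y : X) (6 * r n y)) ≤ 12 * ENNReal.ofReal (r n y) := by
    refine (ediam_closedBall_le _ _).trans_eq ?_
    rw [ENNReal.ofReal_mul (by norm_num), ← mul_assoc, ENNReal.ofReal_ofNat]
    norm_num
  have hscale : Tendsto (fun n : ℕ => 12 * ENNReal.ofReal (1 / ((n : ℝ) + 1))) atTop (𝓝 0) := by
    simpa using ENNReal.Tendsto.const_mul
      (ENNReal.tendsto_ofReal (tendsto_one_div_add_atTop_nhds_zero_nat (𝕜 := ℝ)))
      (Or.inr (ENNReal.ofNat_ne_top (n := 12)))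
  have htsum (n : ℕ) : ∑' y : u n, ediam (closedBall (y : X) (6 * r n y)) ^ s ≤ ν univ / c := by
    rw [ENNReal.le_div_iff_mul_le (.inl hc) (.inl hc'), ← ENNReal.tsum_mul_right]
    refine (ENNReal.tsum_le_tsum fun y => ?_).trans (hsum n)
    calc ediam (closedBall (y : X) (6 * r n y)) ^ s * c
        ≤ c * (12 * ENNReal.ofReal (r n y)) ^ s := by rw [mul_comm]; gcongr; exact hdiam n y
      _ ≤ ν (ball (y : X) (r n y)) := (hr n y y.2).2.le
  refine (Measure.hausdorffMeasure_le_liminf_tsum s G _ hscale _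
    (Eventually.of_forall fun n y => (hdiam n y).trans ?_) (Eventually.of_forall hcov)).trans ?_
  · gcongr
    exact (hr n y y.2).1.le
  · exact (liminf_le_liminf (Eventually.of_forall htsum)).trans_eq (liminf_const _)

lemma lowerSemicontinuous_measure_ball [PseudoMetricSpace X] [MeasurableSpace X] (ν : Measure X)
    (r : ℝ) : LowerSemicontinuous fun y => ν (ball y r) := by
  intro y a hya
  have hball : ⋃ n : ℕ, ball y (r - 1 / ((n : ℝ) + 1)) = ball y r := by
    ext z
    simp only [mem_iUnion, mem_ball]
    constructor
    · rintro ⟨n, hn⟩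
      linarith [Nat.one_div_pos_of_nat (α := ℝ) (n := n)]
    · intro hz
      obtain ⟨n, hn⟩ := exists_nat_one_div_lt (sub_pos.2 hz)
      exact ⟨n, by linarith⟩
  have hmono : Monotone fun n : ℕ => ball y (r - 1 / ((n : ℝ) + 1)) := fun a b hab =>
    ball_subset_ball (by linarith [Nat.one_div_le_one_div (α := ℝ) hab])
  have hlim := tendsto_measure_iUnion_atTop (μ := ν) hmono
  rw [hball] at hlim
  obtain ⟨n, hn⟩ := (hlim.eventually (lt_mem_nhds hya)).exists
  filter_upwards [ball_mem_nhds y (Nat.one_div_pos_of_nat (n := n))] with z hz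
  refine hn.trans_le (measure_mono (ball_subset_ball' ?_))
  rw [mem_ball'] at hz
  linarith

lemma isClosed_setOf_measure_ball_le [PseudoMetricSpace X] [MeasurableSpace X] (ν : Measure X)
    (δ : ℝ) (b : ℝ → ℝ≥0∞) : IsClosed {y | ∀ r, 0 < r → r < δ → ν (ball y r) ≤ b r} := by
  simp only [ofPred_forall]
  exact isClosed_iInter fun r => isClosed_iInter fun _ => isClosed_iInter fun _ =>
    (lowerSemicontinuous_measure_ball ν r).isClosed_preimage (b r)

lemma exists_pos_measure_setOf_measure_ball_le [MetricSpace X] [SeparableSpace X]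
    [MeasurableSpace X] [BorelSpace X] {s : ℝ} (hs : 0 ≤ s) {A : Set X} (h0 : μH[s] A ≠ 0)
    (h1 : μH[s] A ≠ ∞) :
    ∃ δ > 0, μH[s] (A ∩ {y | ∀ r, 0 < r → r < δ →
      (μH[s].restrict A) (ball y r) ≤ 2 * (12 * ENNReal.ofReal r) ^ s}) ≠ 0 := by
  set b : ℝ → ℝ≥0∞ := fun r => 2 * (12 * ENNReal.ofReal r) ^ s
  set G := {y | ∃ᶠ r in 𝓝[>] (0 : ℝ), b r < (μH[s].restrict A) (ball y r)}
  by_contra! hnull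
  have hcover : A ⊆ (⋃ n : ℕ, A ∩ {y | ∀ r, 0 < r → r < 1 / ((n : ℝ) + 1) →
      (μH[s].restrict A) (ball y r) ≤ b r}) ∪ G := by
    intro y hy
    by_cases hyG : y ∈ G
    · exact Or.inr hyG
    have hev : ∀ᶠ r in 𝓝[>] (0 : ℝ), (μH[s].restrict A) (ball y r) ≤ b r := by
      simpa only [G, mem_ofPred_eq, not_frequently, not_lt] using hyG
    obtain ⟨δ, hδ, hle⟩ := (nhdsGT_basis (0 : ℝ)).eventually_iff.1 hev
    obtain ⟨n, hn⟩ := exists_nat_one_div_lt hδ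
    exact Or.inl (mem_iUnion.2 ⟨n, hy, fun r hr hrn => hle ⟨hr, hrn.trans hn⟩⟩)
  have hhalf : μH[s] A ≤ μH[s] A / 2 := by
    calc μH[s] A ≤ _ + μH[s] G := (measure_mono hcover).trans (measure_union_le _ _)
      _ = μH[s] G := by
        rw [measure_iUnion_null fun n => hnull _ Nat.one_div_pos_of_nat, zero_add]
      _ ≤ (μH[s].restrict A) univ / 2 :=
        hausdorffMeasure_frequently_lt_measure_ball_le hs _ (by simp) (by simp)
      _ = μH[s] A / 2 := by rw [Measure.restrict_apply_univ]
  exact hhalf.not_gt (ENNReal.half_lt_self h0 h1)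

lemma isFrostman_restrict [PseudoMetricSpace X] [MeasurableSpace X] [OpensMeasurableSpace X]
    {ν : Measure X} [IsFiniteMeasure ν] {K : Set X} {s δ : ℝ} {C : ℝ≥0∞} (hs : 0 ≤ s) (hδ : 0 < δ)
    (hC : C ≠ ∞) (hK : ∀ z ∈ K, ∀ r, 0 < r → r < δ → ν (ball z r) ≤ C * ENNReal.ofReal r ^ s) :
    IsFrostman (ν.restrict K) s := by
  have hδ0 : ENNReal.ofReal (δ / 3) ^ s ≠ 0 :=
    (ENNReal.rpow_pos (by simpa using hδ) ENNReal.ofReal_ne_top).ne'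
  refine ⟨C * 3 ^ s + ν univ / ENNReal.ofReal (δ / 3) ^ s, ENNReal.add_ne_top.2
    ⟨by finiteness, ENNReal.div_ne_top (by finiteness) hδ0⟩, fun y r hr => ?_⟩
  rw [Measure.restrict_apply measurableSet_closedBall]
  rcases lt_or_ge r (δ / 3) with hrδ | hδr
  · rcases (closedBall y r ∩ K).eq_empty_or_nonempty with hempty | ⟨z, hzy, hzK⟩
    · simp [hempty]
    have hsub : closedBall y r ⊆ ball z (3 * r) := fun w hw => by
      rw [mem_closedBall] at hw
      rw [mem_closedBall'] at hzy
      rw [mem_ball]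
      linarith [dist_triangle w y z]
    calc ν (closedBall y r ∩ K) ≤ ν (ball z (3 * r)) := measure_mono (inter_subset_left.trans hsub)
      _ ≤ C * ENNReal.ofReal (3 * r) ^ s := hK z hzK _ (by positivity) (by linarith)
      _ = C * 3 ^ s * ENNReal.ofReal r ^ s := by
        rw [mul_assoc, ← ENNReal.mul_rpow_of_nonneg _ _ hs, ENNReal.ofReal_mul (by norm_num),
          ENNReal.ofReal_ofNat]
      _ ≤ _ := by gcongr; exact le_self_add
  · calc ν (closedBall y r ∩ K) ≤ ν univ := measure_mono (subset_univ _)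
      _ = ν univ / ENNReal.ofReal (δ / 3) ^ s * ENNReal.ofReal (δ / 3) ^ s :=
        (ENNReal.div_mul_cancel hδ0 (by finiteness)).symm
      _ ≤ _ := by gcongr; exact le_add_self

lemma exists_isCompact_isFrostman [MetricSpace X] [SeparableSpace X] [CompleteSpace X]
    [MeasurableSpace X] [BorelSpace X] {s : ℝ} (hs : 0 ≤ s) {A : Set X} (hA : MeasurableSet A)
    (h0 : μH[s] A ≠ 0) (h1 : μH[s] A ≠ ∞) :
    ∃ K ⊆ A, IsCompact K ∧ μH[s] K ≠ 0 ∧ IsFrostman (μH[s].restrict K) s := by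
  obtain ⟨δ, hδ, hpos⟩ := exists_pos_measure_setOf_measure_ball_le hs h0 h1
  set H := {y | ∀ r, 0 < r → r < δ →
    (μH[s].restrict A) (ball y r) ≤ 2 * (12 * ENNReal.ofReal r) ^ s}
  have hAH : MeasurableSet (A ∩ H) :=
    hA.inter (isClosed_setOf_measure_ball_le _ _ _).measurableSet
  have : Fact (μH[s] A < ∞) := ⟨h1.lt_top⟩
  have := UniformSpace.secondCountable_of_separable X
  obtain ⟨K, hKAH, hK, hKpos⟩ := hAH.exists_lt_isCompact (μ := μH[s].restrict A) (r := 0)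
    (by rwa [Measure.restrict_eq_self _ inter_subset_left, pos_iff_ne_zero])
  have hKA : K ⊆ A := hKAH.trans inter_subset_left
  rw [Measure.restrict_eq_self _ hKA] at hKpos
  refine ⟨K, hKA, hK, hKpos.ne', ?_⟩
  rw [← Measure.restrict_restrict_of_subset hKA]
  refine isFrostman_restrict hs hδ (C := 2 * 12 ^ s) (by finiteness) fun z hz r hr hrδ => ?_
  rw [mul_assoc, ← ENNReal.mul_rpow_of_nonneg _ _ hs]
  exact (hKAH hz).2 r hr hrδ

end Frostman

section Projections
variable {m : ℕ}

/-- The projection of `ℝᵐ × ℝ` onto `ℝᵐ × {0}` along the direction `(u, 1)`. Its fibres are the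
lines of slope `u`; as `u` varies these are all the non-horizontal lines. -/
def projAlong (u : Fin m → ℝ) (y : (Fin m → ℝ) × ℝ) : Fin m → ℝ := y.1 - y.2 • u

lemma projAlong_sub (u : Fin m → ℝ) (y z : (Fin m → ℝ) × ℝ) :
    projAlong u (y - z) = projAlong u y - projAlong u z := by
  simp only [projAlong, Prod.fst_sub, Prod.snd_sub, sub_smul]; abel

@[fun_prop]
lemma continuous_projAlong :
    Continuous fun p : (Fin m → ℝ) × ((Fin m → ℝ) × ℝ) => projAlong p.1 p.2 := by
  unfold projAlong; fun_prop

lemma norm_le_norm_projAlong_add (u : Fin m → ℝ) (w : (Fin m → ℝ) × ℝ) :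
    ‖w‖ ≤ ‖projAlong u w‖ + |w.2| * (1 + ‖u‖) := by
  have hfst : ‖w.1‖ ≤ ‖projAlong u w‖ + |w.2| * ‖u‖ := by
    have := norm_add_le (projAlong u w) (w.2 • u)
    rwa [projAlong, sub_add_cancel, norm_smul, Real.norm_eq_abs] at this
  rw [Prod.norm_def, Real.norm_eq_abs]
  refine max_le (by linarith [abs_nonneg w.2]) ?_
  nlinarith [abs_nonneg w.2, norm_nonneg u, norm_nonneg (projAlong u w)]

/-- The slope of a non-horizontal vector `w`, that is, the `u` for which `w` is a multiple of
`(u, 1)`; it is `0` when `w` is horizontal. -/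
noncomputable def lineSlope (w : (Fin m → ℝ) × ℝ) : Fin m → ℝ := w.2⁻¹ • w.1

lemma snd_smul_lineSlope {w : (Fin m → ℝ) × ℝ} (hw : w.2 ≠ 0) : w.2 • lineSlope w = w.1 := by
  rw [lineSlope, smul_inv_smul₀ hw]

lemma norm_projAlong_eq {w : (Fin m → ℝ) × ℝ} (hw : w.2 ≠ 0) (u : Fin m → ℝ) :
    ‖projAlong u w‖ = |w.2| * dist u (lineSlope w) := by
  rw [projAlong, ← snd_smul_lineSlope hw, ← smul_sub, norm_smul, dist_comm, dist_eq_norm,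
    Real.norm_eq_abs]

lemma setOf_norm_projAlong_le_eq_closedBall {w : (Fin m → ℝ) × ℝ} (hw : w.2 ≠ 0) (ρ : ℝ) :
    {u | ‖projAlong u w‖ ≤ ρ} = closedBall (lineSlope w) (ρ / |w.2|) := by
  ext u
  rw [mem_ofPred_eq, norm_projAlong_eq hw, mem_closedBall, le_div_iff₀ (abs_pos.2 hw), mul_comm]

/-- A positive, continuous and integrable weight on the space `ℝᵐ` of slopes. -/
noncomputable def slopeDensity (u : Fin m → ℝ) : ℝ := (1 + ‖u‖) ^ (-((m : ℝ) + 1))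

lemma slopeDensity_pos (u : Fin m → ℝ) : 0 < slopeDensity u := by
  unfold slopeDensity; positivity

lemma continuous_slopeDensity : Continuous (slopeDensity (m := m)) :=
  Continuous.rpow_const (by fun_prop) fun u => Or.inl (by positivity)

lemma slopeDensity_le (u : Fin m → ℝ) : slopeDensity u ≤ (1 + ‖u‖)⁻¹ ^ m :=
  calc slopeDensity u ≤ (1 + ‖u‖) ^ (-(m : ℝ)) :=
        Real.rpow_le_rpow_of_exponent_le (by linarith [norm_nonneg u]) (by linarith)
    _ = (1 + ‖u‖)⁻¹ ^ m := by rw [Real.rpow_neg (by positivity), Real.rpow_natCast, inv_pow]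

/-- A finite measure on the space of slopes, mutually absolutely continuous with Lebesgue
measure. -/
noncomputable def slopeMeasure (m : ℕ) : Measure (Fin m → ℝ) :=
  volume.withDensity fun u => ENNReal.ofReal (slopeDensity u)

instance (m : ℕ) : IsFiniteMeasure (slopeMeasure m) :=
  isFiniteMeasure_withDensity (finite_integral_one_add_norm (by simp)).ne

lemma ae_slopeMeasure : ae (slopeMeasure m) = ae volume :=
  (withDensity_absolutelyContinuous _ _).ae_le.antisymm
    (withDensity_absolutelyContinuous'
      continuous_slopeDensity.measurable.ennreal_ofReal.aemeasurable
      (Eventually.of_forall fun u => by simpa using slopeDensity_pos u)).ae_le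

lemma slopeMeasure_norm_projAlong_le_of_lt_norm {w : (Fin m → ℝ) × ℝ} {ρ : ℝ} (hρ : 0 ≤ ρ)
    (hw : 2 * ρ < ‖w‖) :
    slopeMeasure m {u | ‖projAlong u w‖ ≤ ρ} ≤ ENNReal.ofReal (4 * (ρ / ‖w‖)) ^ m := by
  have hw0 : 0 < ‖w‖ := by linarith
  have hnorm (u) (hu : u ∈ {u | ‖projAlong u w‖ ≤ ρ}) : ‖w‖ ≤ 2 * |w.2| * (1 + ‖u‖) := by
    rw [mem_ofPred_eq] at hu
    linarith [norm_le_norm_projAlong_add u w]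
  rcases eq_or_ne w.2 0 with hw2 | hw2
  · have hempty : {u | ‖projAlong u w‖ ≤ ρ} = ∅ :=
      eq_empty_of_forall_notMem fun u hu => by
        have := hnorm u hu
        rw [hw2] at this
        simp only [abs_zero, mul_zero, zero_mul] at this
        linarith
    simp [hempty]
  have hball := setOf_norm_projAlong_le_eq_closedBall hw2 ρ
  have hmeas : MeasurableSet {u | ‖projAlong u w‖ ≤ ρ} := hball ▸ measurableSet_closedBall
  have hdensity (u) (hu : u ∈ {u | ‖projAlong u w‖ ≤ ρ}) :
      ENNReal.ofReal (slopeDensity u) ≤ ENNReal.ofReal (2 * |w.2| / ‖w‖) ^ m := by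
    rw [← ENNReal.ofReal_pow (by positivity)]
    refine ENNReal.ofReal_le_ofReal ((slopeDensity_le u).trans ?_)
    gcongr
    rw [inv_le_comm₀ (by positivity) (by positivity), inv_div, div_le_iff₀' (by positivity)]
    exact hnorm u hu
  calc slopeMeasure m {u | ‖projAlong u w‖ ≤ ρ}
      ≤ ENNReal.ofReal (2 * |w.2| / ‖w‖) ^ m * volume {u | ‖projAlong u w‖ ≤ ρ} := by
        rw [slopeMeasure, withDensity_apply _ hmeas, ← setLIntegral_const]
        exact setLIntegral_mono' hmeas hdensity
    _ = ENNReal.ofReal (4 * (ρ / ‖w‖)) ^ m := by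
        rw [hball, Real.volume_pi_closedBall _ (by positivity), Fintype.card_fin,
          ENNReal.ofReal_pow (by positivity), ← mul_pow, ← ENNReal.ofReal_mul (by positivity)]
        congr 2
        have := abs_pos.2 hw2
        field_simp
        ring

/-- The constant in the transversality estimate `slopeMeasure_norm_projAlong_le`. -/
noncomputable def transversalityConst (m : ℕ) : ℝ≥0∞ := slopeMeasure m univ * 2 ^ m + 4 ^ m

lemma transversalityConst_ne_top (m : ℕ) : transversalityConst m ≠ ∞ := by
  unfold transversalityConst; finiteness

lemma slopeMeasure_le_transversalityConst (S : Set (Fin m → ℝ)) :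
    slopeMeasure m S ≤ transversalityConst m :=
  calc slopeMeasure m S ≤ slopeMeasure m univ := measure_mono (subset_univ _)
    _ ≤ slopeMeasure m univ * 2 ^ m := le_mul_of_one_le_right' (one_le_pow₀ one_le_two)
    _ ≤ transversalityConst m := le_self_add

lemma slopeMeasure_norm_projAlong_le (w : (Fin m → ℝ) × ℝ) {ρ : ℝ} (hρ : 0 < ρ) :
    slopeMeasure m {u | ‖projAlong u w‖ ≤ ρ} ≤
      transversalityConst m * (ENNReal.ofReal ρ / ‖w‖ₑ) ^ m := by
  rw [← ofReal_norm]
  rcases le_or_gt ‖w‖ (2 * ρ) with hnear | hfar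
  · have hhalf : 1 ≤ 2 * (ENNReal.ofReal ρ / ENNReal.ofReal ‖w‖) := by
      rw [← mul_div_assoc, ENNReal.le_div_iff_mul_le (by simp [hρ]) (by simp), one_mul,
        ← ENNReal.ofReal_ofNat, ← ENNReal.ofReal_mul zero_le_two]
      exact ENNReal.ofReal_le_ofReal hnear
    calc slopeMeasure m {u | ‖projAlong u w‖ ≤ ρ} ≤ slopeMeasure m univ :=
          measure_mono (subset_univ _)
      _ ≤ slopeMeasure m univ * (2 * (ENNReal.ofReal ρ / ENNReal.ofReal ‖w‖)) ^ m :=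
          le_mul_of_one_le_right' (one_le_pow₀ hhalf)
      _ ≤ _ := by
          rw [mul_pow, ← mul_assoc]
          gcongr
          exact le_self_add
  · refine (slopeMeasure_norm_projAlong_le_of_lt_norm hρ.le hfar).trans ?_
    rw [ENNReal.ofReal_mul zero_le_four, ENNReal.ofReal_ofNat, mul_pow,
      ENNReal.ofReal_div_of_pos (by linarith)]
    gcongr
    exact le_add_self

end Projections

section DiscreteFrostman

lemma exists_saturated_weights {ι κ : Type*} [Finite κ] (S : κ → Finset ι) (b : κ → ℝ≥0)
    (Q : Finset ι) (hQ : ∀ i ∈ Q, ∃ k, i ∈ S k) :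
    ∃ w : ι → ℝ≥0, (∀ k, ∑ i ∈ S k, w i ≤ b k) ∧
      ∀ i ∈ Q, ∃ k, i ∈ S k ∧ ∑ i ∈ S k, w i = b k := by
  classical
  have := Fintype.ofFinite κ
  induction Q using Finset.induction_on with
  | empty => exact ⟨fun _ => 0, by simp, by simp⟩
  | insert i Q hi ih =>
    obtain ⟨w, hw, hsat⟩ := ih fun j hj => hQ j (Finset.mem_insert_of_mem hj)
    obtain ⟨k₀, hk₀⟩ := hQ i (Finset.mem_insert_self _ _)
    -- Raise the weight of `i` until the tightest constraint containing it becomes an equality.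
    obtain ⟨k₁, hk₁, hmin⟩ := Finset.exists_min_image (Finset.univ.filter fun k => i ∈ S k)
      (fun k => b k - ∑ i ∈ S k, w i) ⟨k₀, by simpa using hk₀⟩
    simp only [Finset.mem_filter, Finset.mem_univ, true_and] at hk₁ hmin
    set ε := b k₁ - ∑ i ∈ S k₁, w i with hε
    have hsum (k : κ) : ∑ j ∈ S k, (w j + if j = i then ε else 0) =
        ∑ j ∈ S k, w j + if i ∈ S k then ε else 0 := by
      rw [Finset.sum_add_distrib, Finset.sum_ite_eq']
    have hfeasible (k : κ) : ∑ j ∈ S k, (w j + if j = i then ε else 0) ≤ b k := by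
      rw [hsum]
      split_ifs with h
      · calc _ ≤ ∑ j ∈ S k, w j + (b k - ∑ j ∈ S k, w j) := by gcongr; exact hmin k h
          _ = b k := add_tsub_cancel_of_le (hw k)
      · simpa using hw k
    refine ⟨fun j => w j + if j = i then ε else 0, hfeasible, fun j hj => ?_⟩
    rcases Finset.mem_insert.1 hj with rfl | hj
    · exact ⟨k₁, hk₁, by rw [hsum, if_pos hk₁, hε, add_tsub_cancel_of_le (hw k₁)]⟩
    · obtain ⟨k, hk, hkeq⟩ := hsat j hj
      refine ⟨k, hk, (hfeasible k).antisymm ?_⟩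
      rw [← hkeq, hsum]
      exact le_self_add

variable {X : Type*} [PseudoMetricSpace X]

lemma hausdorffContent_biUnion_closedBall_le {t : ℝ} (ht : 0 ≤ t) (P : Finset X) {w : X → ℝ≥0∞}
    {c : X → X} {r : X → ℝ} {R ε : ℝ} (hrR : ∀ x ∈ P, r x ≤ R) (hεr : ∀ x ∈ P, ε ≤ r x)
    (hxc : ∀ x ∈ P, dist x (c x) ≤ r x)
    (hw : ∀ x ∈ P, ENNReal.ofReal (r x) ^ t ≤ ∑ z ∈ P with dist z (c x) ≤ r x, w z) :
    hausdorffContent X t (⋃ x ∈ P, closedBall x ε) ≤ 12 ^ t * ∑ x ∈ P, w x := by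
  classical
  obtain ⟨u, huP, hdisj, hcov⟩ := Vitali.exists_disjoint_subfamily_covering_enlargement_closedBall
    (P : Set X) c r R hrR 5 (by norm_num)
  lift u to Finset X using P.finite_toSet.subset huP
  have hcover : ⋃ x ∈ P, closedBall x ε ⊆ ⋃ x ∈ u, closedBall (c x) (6 * r x) := by
    refine iUnion₂_subset fun x hx z hz => ?_
    obtain ⟨b, hb, hsub⟩ := hcov x hx
    refine mem_iUnion₂.2 ⟨b, hb, ?_⟩
    have hxb := mem_closedBall.1 (hsub (hxc x hx))
    rw [mem_closedBall] at hz ⊢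
    linarith [dist_triangle z x (c b), hεr b (huP hb), hεr x hx]
  have hball (x) (hx : x ∈ u) : hausdorffContent X t (closedBall (c x) (6 * r x)) ≤
      12 ^ t * ∑ z ∈ P with dist z (c x) ≤ r x, w z := by
    refine (hausdorffContent_closedBall_le ht _ _).trans ?_
    rw [ENNReal.ofReal_mul (by norm_num), ENNReal.ofReal_ofNat, ← mul_assoc,
      ENNReal.mul_rpow_of_nonneg _ _ ht]
    norm_num
    gcongr
    exact hw x (huP hx)
  have hpairwise : (u : Set X).PairwiseDisjoint fun x => P.filter fun z => dist z (c x) ≤ r x :=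
    fun a ha b hb hab => Finset.disjoint_left.2 fun z hza hzb =>
      Set.disjoint_left.1 (hdisj ha hb hab) (mem_closedBall.2 (Finset.mem_filter.1 hza).2)
        (mem_closedBall.2 (Finset.mem_filter.1 hzb).2)
  calc hausdorffContent X t (⋃ x ∈ P, closedBall x ε)
      ≤ ∑ x ∈ u, hausdorffContent X t (closedBall (c x) (6 * r x)) :=
        (measure_mono hcover).trans (measure_biUnion_finset_le _ _)
    _ ≤ ∑ x ∈ u, 12 ^ t * ∑ z ∈ P with dist z (c x) ≤ r x, w z := Finset.sum_le_sum hball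
    _ ≤ 12 ^ t * ∑ x ∈ P, w x := by
        rw [← Finset.mul_sum, ← Finset.sum_biUnion hpairwise]
        gcongr
        exact Finset.biUnion_subset.2 fun x _ => Finset.filter_subset _ _

lemma ofReal_half_pow (k : ℕ) : ENNReal.ofReal ((1 / 2) ^ k) = (1 / 2) ^ k := by
  rw [ENNReal.ofReal_pow (by norm_num), ENNReal.ofReal_div_of_pos (by norm_num)]
  simp

lemma exists_discrete_frostman {t : ℝ} (ht : 0 ≤ t) (P : Finset X) (J : ℕ) :
    ∃ w : X → ℝ≥0,
      (∀ y ∈ P, ∀ k ≤ J,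
        ∑ x ∈ P with dist x y ≤ (1 / 2) ^ k, (w x : ℝ≥0∞) ≤ ((1 / 2 : ℝ≥0∞) ^ k) ^ t) ∧
      hausdorffContent X t (⋃ x ∈ P, closedBall x ((1 / 2) ^ J)) ≤
        12 ^ t * ∑ x ∈ P, (w x : ℝ≥0∞) := by
  classical
  rcases P.eq_empty_or_nonempty with rfl | ⟨x₀, hx₀⟩
  · exact ⟨fun _ => 0, by simp, by simp⟩
  have : Nonempty (P × Fin (J + 1)) := ⟨(⟨x₀, hx₀⟩, 0)⟩
  obtain ⟨w, hw, hsat⟩ := exists_saturated_weights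
    (fun q : P × Fin (J + 1) => P.filter fun x => dist x (q.1 : X) ≤ (1 / 2) ^ (q.2 : ℕ))
    (fun q => ((1 / 2 : ℝ≥0) ^ (q.2 : ℕ)) ^ t) P fun i hi => ⟨(⟨i, hi⟩, 0), by simp [hi]⟩
  have hcast (k : ℕ) : ((((1 / 2 : ℝ≥0) ^ k) ^ t : ℝ≥0) : ℝ≥0∞) = ((1 / 2 : ℝ≥0∞) ^ k) ^ t := by
    rw [ENNReal.coe_rpow_of_nonneg _ ht]
    simp [ENNReal.inv_pow]
  choose! q hq_mem hq_sat using hsat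
  refine ⟨w, fun y hy k hk => ?_, hausdorffContent_biUnion_closedBall_le ht P
    (c := fun x => (q x).1) (r := fun x => (1 / 2) ^ ((q x).2 : ℕ)) (R := 1)
    (fun x _ => pow_le_one₀ (by norm_num) (by norm_num))
    (fun x _ => pow_le_pow_of_le_one (by norm_num) (by norm_num) (by lia))
    (fun x hx => (Finset.mem_filter.1 (hq_mem x hx)).2) fun x hx => ?_⟩
  · rw [← hcast]
    exact_mod_cast hw (⟨y, hy⟩, ⟨k, by lia⟩)
  · rw [ofReal_half_pow, ← hcast, ← hq_sat x hx]
    push_cast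
    rfl

end DiscreteFrostman

lemma lintegral_mul_sq_le {α : Type*} [MeasurableSpace α] (μ : Measure α) {f g : α → ℝ≥0∞}
    (hf : AEMeasurable f μ) (hg : AEMeasurable g μ) :
    (∫⁻ x, f x * g x ∂μ) ^ 2 ≤ (∫⁻ x, f x ^ 2 ∂μ) * ∫⁻ x, g x ^ 2 ∂μ := by
  have h := ENNReal.lintegral_mul_le_Lp_mul_Lq μ Real.HolderConjugate.two_two hf hg
  simp only [Pi.mul_apply, ENNReal.rpow_two] at h
  calc (∫⁻ x, f x * g x ∂μ) ^ 2
      ≤ ((∫⁻ x, f x ^ 2 ∂μ) ^ (1 / 2 : ℝ) * (∫⁻ x, g x ^ 2 ∂μ) ^ (1 / 2 : ℝ)) ^ 2 :=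
        pow_le_pow_left' h 2
    _ = (∫⁻ x, f x ^ 2 ∂μ) * ∫⁻ x, g x ^ 2 ∂μ := by
        rw [mul_pow, ← ENNReal.rpow_natCast, ← ENNReal.rpow_mul, ← ENNReal.rpow_natCast,
          ← ENNReal.rpow_mul]
        norm_num

section DiscreteEnergy
variable {m : ℕ}

/-- The constant relating the mass of a discrete Frostman measure of exponent `t` to its energy,
which is a geometric sum over the dyadic scales. It is finite for `m < t`. -/
noncomputable def energyConst (m : ℕ) (t : ℝ) : ℝ≥0∞ :=
  transversalityConst m * (2 ^ m * ∑' k : ℕ, (2 ^ m * (1 / 2 : ℝ≥0∞) ^ t) ^ k)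

lemma energyConst_ne_top {t : ℝ} (ht : (m : ℝ) < t) : energyConst m t ≠ ∞ := by
  have hratio : 2 ^ m * (1 / 2 : ℝ≥0∞) ^ t < 1 := by
    calc 2 ^ m * (1 / 2 : ℝ≥0∞) ^ t < 2 ^ m * (1 / 2 : ℝ≥0∞) ^ (m : ℝ) := by
          refine ENNReal.mul_lt_mul_right (by simp) (by simp) ?_
          exact ENNReal.rpow_lt_rpow_of_exponent_gt (by simp) (by simp) ht
      _ = 1 := by
          rw [ENNReal.rpow_natCast, ← mul_pow, ENNReal.mul_div_cancel (by simp) (by simp), one_pow]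
  rw [energyConst, ENNReal.tsum_geometric]
  refine ENNReal.mul_ne_top (transversalityConst_ne_top m) (ENNReal.mul_ne_top (by simp) ?_)
  exact ENNReal.inv_ne_top.2 (tsub_pos_of_lt hratio).ne'

lemma slopeMeasure_norm_projAlong_le_mul_two_pow {w : (Fin m → ℝ) × ℝ} {ρ : ℝ} (hρ : 0 < ρ) {k : ℕ}
    (hk : (1 / 2) ^ k ≤ max ρ ‖w‖) :
    slopeMeasure m {u | ‖projAlong u w‖ ≤ ρ} ≤
      transversalityConst m * (ENNReal.ofReal ρ * 2 ^ k) ^ m := by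
  have hinv : (2 : ℝ≥0∞) ^ k = (ENNReal.ofReal ((1 / 2) ^ k))⁻¹ := by
    rw [ofReal_half_pow, one_div, ENNReal.inv_pow, inv_inv]
  rcases le_max_iff.1 hk with hk | hk
  · refine (slopeMeasure_le_transversalityConst _).trans
      (le_mul_of_one_le_right' (one_le_pow₀ ?_))
    rw [hinv, ← div_eq_mul_inv, ENNReal.le_div_iff_mul_le (by simp) (by simp), one_mul]
    exact ENNReal.ofReal_le_ofReal hk
  · refine (slopeMeasure_norm_projAlong_le w hρ).trans ?_
    rw [hinv, div_eq_mul_inv, ← ofReal_norm w]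
    gcongr

lemma exists_half_pow_near {d : ℝ} (hd : d ≤ 1) (J : ℕ) :
    ∃ k ≤ J, d ≤ (1 / 2) ^ k ∧ (1 / 2) ^ (k + 1) ≤ max ((1 / 2) ^ J) d := by
  rcases le_or_gt d ((1 / 2) ^ J) with h | h
  · exact ⟨J, le_rfl, h, le_max_of_le_left
      (pow_le_pow_of_le_one (by norm_num) (by norm_num) J.le_succ)⟩
  · have hd0 : 0 < d := lt_trans (by positivity) h
    obtain ⟨k, hk1, hk2⟩ := exists_nat_pow_near_of_lt_one hd0 hd (by norm_num : (0 : ℝ) < 1 / 2)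
      (by norm_num)
    refine ⟨k, ?_, hk2, le_max_of_le_right hk1.le⟩
    by_contra! hlt
    have := pow_le_pow_of_le_one (by norm_num : (0 : ℝ) ≤ 1 / 2) (by norm_num) hlt.le
    linarith

lemma slopeMeasure_norm_projAlong_sub_le_sum {x y : (Fin m → ℝ) × ℝ} (hxy : dist x y ≤ 1) {J : ℕ}
    {ρ : ℝ} (hρ : (1 / 2) ^ J ≤ ρ) :
    slopeMeasure m {u | ‖projAlong u (x - y)‖ ≤ ρ} ≤
      transversalityConst m * ENNReal.ofReal ρ ^ m *
        ∑ k ∈ Finset.range (J + 1), if dist x y ≤ (1 / 2) ^ k then (2 ^ (k + 1)) ^ m else 0 := by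
  obtain ⟨k, hkJ, hk, hk'⟩ := exists_half_pow_near hxy J
  rw [dist_eq_norm] at hk'
  calc slopeMeasure m {u | ‖projAlong u (x - y)‖ ≤ ρ}
      ≤ transversalityConst m * (ENNReal.ofReal ρ * 2 ^ (k + 1)) ^ m :=
        slopeMeasure_norm_projAlong_le_mul_two_pow (lt_of_lt_of_le (by positivity) hρ)
          (hk'.trans (max_le_max_right _ hρ))
    _ = transversalityConst m * ENNReal.ofReal ρ ^ m *
          if dist x y ≤ (1 / 2) ^ k then (2 ^ (k + 1)) ^ m else 0 := by
        rw [if_pos hk, mul_pow, mul_assoc]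
    _ ≤ _ := by
        gcongr
        exact Finset.single_le_sum
          (f := fun k => if dist x y ≤ (1 / 2) ^ k then ((2 : ℝ≥0∞) ^ (k + 1)) ^ m else 0)
          (fun _ _ => zero_le) (Finset.mem_range.2 (Nat.lt_succ_of_le hkJ))

lemma sum_mul_sum_two_pow_le {X : Type*} [Dist X] {t : ℝ} {P : Finset X} {J : ℕ} {w : X → ℝ≥0∞}
    {y : X} (hw : ∀ k ≤ J, ∑ x ∈ P with dist x y ≤ (1 / 2) ^ k, w x ≤ ((1 / 2 : ℝ≥0∞) ^ k) ^ t) :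
    ∑ x ∈ P, w x *
        (∑ k ∈ Finset.range (J + 1), if dist x y ≤ (1 / 2) ^ k then (2 ^ (k + 1)) ^ m else 0) ≤
      2 ^ m * ∑' k : ℕ, (2 ^ m * (1 / 2 : ℝ≥0∞) ^ t) ^ k := by
  calc _ = ∑ k ∈ Finset.range (J + 1), (2 ^ (k + 1)) ^ m *
        ∑ x ∈ P with dist x y ≤ (1 / 2) ^ k, w x := by
        simp_rw [Finset.mul_sum]
        rw [Finset.sum_comm]
        refine Finset.sum_congr rfl fun k _ => ?_
        rw [Finset.sum_filter]
        refine Finset.sum_congr rfl fun x _ => ?_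
        split_ifs <;> simp [mul_comm]
    _ ≤ ∑ k ∈ Finset.range (J + 1), (2 ^ (k + 1)) ^ m * ((1 / 2 : ℝ≥0∞) ^ k) ^ t := by
        gcongr with k hk
        exact hw k (Nat.le_of_lt_succ (Finset.mem_range.1 hk))
    _ = 2 ^ m * ∑ k ∈ Finset.range (J + 1), (2 ^ m * (1 / 2 : ℝ≥0∞) ^ t) ^ k := by
        rw [Finset.mul_sum]
        refine Finset.sum_congr rfl fun k _ => ?_
        rw [mul_pow, ← mul_assoc, ← ENNReal.rpow_natCast_mul, mul_comm (k : ℝ) t,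
          ENNReal.rpow_mul_natCast]
        congr 1
        ring
    _ ≤ 2 ^ m * ∑' k : ℕ, (2 ^ m * (1 / 2 : ℝ≥0∞) ^ t) ^ k := by
        gcongr
        exact ENNReal.sum_le_tsum _

lemma discrete_energy_le {t : ℝ} {P : Finset ((Fin m → ℝ) × ℝ)}
    (hP : ∀ x ∈ P, ∀ y ∈ P, dist x y ≤ 1) {J : ℕ} {w : (Fin m → ℝ) × ℝ → ℝ≥0∞}
    (hw : ∀ y ∈ P, ∀ k ≤ J, ∑ x ∈ P with dist x y ≤ (1 / 2) ^ k, w x ≤ ((1 / 2 : ℝ≥0∞) ^ k) ^ t)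
    {ρ : ℝ} (hρ : (1 / 2) ^ J ≤ ρ) :
    ∑ x ∈ P, ∑ y ∈ P, w x * w y * slopeMeasure m {u | ‖projAlong u (x - y)‖ ≤ ρ} ≤
      energyConst m t * ENNReal.ofReal ρ ^ m * ∑ x ∈ P, w x := by
  calc _ ≤ ∑ x ∈ P, ∑ y ∈ P, w x * w y * (transversalityConst m * ENNReal.ofReal ρ ^ m *
        ∑ k ∈ Finset.range (J + 1), if dist x y ≤ (1 / 2) ^ k then (2 ^ (k + 1)) ^ m else 0) := by
        gcongr with x hx y hy
        exact slopeMeasure_norm_projAlong_sub_le_sum (hP x hx y hy) hρ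
    _ = transversalityConst m * ENNReal.ofReal ρ ^ m * ∑ y ∈ P, w y * ∑ x ∈ P, w x *
      (∑ k ∈ Finset.range (J + 1), if dist x y ≤ (1 / 2) ^ k then (2 ^ (k + 1)) ^ m else 0) := by
        rw [Finset.sum_comm]
        simp only [Finset.mul_sum]
        refine Finset.sum_congr rfl fun y _ => Finset.sum_congr rfl fun x _ =>
          Finset.sum_congr rfl fun k _ => ?_
        ring
    _ ≤ transversalityConst m * ENNReal.ofReal ρ ^ m * ∑ y ∈ P, w y *
        (2 ^ m * ∑' k : ℕ, (2 ^ m * (1 / 2 : ℝ≥0∞) ^ t) ^ k) := by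
        gcongr with y hy
        exact sum_mul_sum_two_pow_le (hw y hy)
    _ = energyConst m t * ENNReal.ofReal ρ ^ m * ∑ x ∈ P, w x := by
        rw [← Finset.sum_mul, energyConst]; ring

end DiscreteEnergy

section Tubes
variable {m : ℕ}

/-- The indicator of the set of lines passing within `ρ` of the point `x`, the distance being
measured horizontally; `(u, v)` stands for the line of slope `u` through `(v, 0)`. -/
noncomputable def tube (ρ : ℝ) (x : (Fin m → ℝ) × ℝ) : (Fin m → ℝ) × (Fin m → ℝ) → ℝ≥0∞ :=
  indicator {z | dist z.2 (projAlong z.1 x) ≤ ρ} 1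

@[fun_prop]
lemma measurable_tube (ρ : ℝ) (x : (Fin m → ℝ) × ℝ) : Measurable (tube ρ x) :=
  measurable_one.indicator (isClosed_le (by fun_prop) continuous_const).measurableSet

lemma lintegral_mul_tube (ρ : ℝ) (x : (Fin m → ℝ) × ℝ) (u : Fin m → ℝ)
    (f : (Fin m → ℝ) → ℝ≥0∞) :
    ∫⁻ v, f v * tube ρ x (u, v) = ∫⁻ v in closedBall (projAlong u x) ρ, f v := by
  rw [← lintegral_indicator measurableSet_closedBall]
  refine lintegral_congr fun v => ?_
  by_cases h : dist v (projAlong u x) ≤ ρ <;> simp [tube, indicator, h, mem_closedBall]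

lemma lintegral_tube_mul_tube_le {ρ : ℝ} (hρ : 0 ≤ ρ) (x y : (Fin m → ℝ) × ℝ) :
    ∫⁻ z, tube ρ x z * tube ρ y z ∂(slopeMeasure m).prod volume ≤
      ENNReal.ofReal (2 * ρ) ^ m * slopeMeasure m {u | ‖projAlong u (x - y)‖ ≤ 2 * ρ} := by
  rw [lintegral_prod _ (by fun_prop)]
  have hm : MeasurableSet {u : Fin m → ℝ | ‖projAlong u (x - y)‖ ≤ 2 * ρ} :=
    (isClosed_le (by fun_prop) continuous_const).measurableSet
  rw [← setLIntegral_const, ← lintegral_indicator hm]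
  refine lintegral_mono fun u => ?_
  rw [lintegral_mul_tube, indicator_apply]
  split_ifs with h
  · calc ∫⁻ v in closedBall (projAlong u y) ρ, tube ρ x (u, v)
        ≤ ∫⁻ _ in closedBall (projAlong u y) ρ, 1 :=
          lintegral_mono fun v => indicator_le_self _ _ _
      _ = ENNReal.ofReal (2 * ρ) ^ m := by
          rw [setLIntegral_one, Real.volume_pi_closedBall _ hρ, Fintype.card_fin,
            ENNReal.ofReal_pow (by positivity)]
  · refine (setLIntegral_eq_zero measurableSet_closedBall fun v hv => ?_).le
    refine indicator_of_notMem (fun hv' => h ?_) _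
    rw [mem_ofPred_eq] at hv' ⊢
    rw [projAlong_sub, ← dist_eq_norm]
    linarith [dist_triangle_left (projAlong u x) (projAlong u y) v, mem_closedBall.1 hv]

lemma lintegral_sum_tube_sq_le {t : ℝ} {P : Finset ((Fin m → ℝ) × ℝ)}
    (hP : ∀ x ∈ P, ∀ y ∈ P, dist x y ≤ 1) {J : ℕ} {w : (Fin m → ℝ) × ℝ → ℝ≥0∞}
    (hw : ∀ y ∈ P, ∀ k ≤ J, ∑ x ∈ P with dist x y ≤ (1 / 2) ^ k, w x ≤ ((1 / 2 : ℝ≥0∞) ^ k) ^ t)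
    {ρ : ℝ} (hρ : (1 / 2) ^ J ≤ ρ) :
    ∫⁻ z, (∑ x ∈ P, w x * tube ρ x z) ^ 2 ∂(slopeMeasure m).prod volume ≤
      energyConst m t * (ENNReal.ofReal (2 * ρ) ^ m) ^ 2 * ∑ x ∈ P, w x := by
  have hρ0 : 0 ≤ ρ := le_trans (by positivity) hρ
  calc ∫⁻ z, (∑ x ∈ P, w x * tube ρ x z) ^ 2 ∂(slopeMeasure m).prod volume
      = ∑ x ∈ P, ∑ y ∈ P, w x * w y *
          ∫⁻ z, tube ρ x z * tube ρ y z ∂(slopeMeasure m).prod volume := by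
        simp_rw [sq, Finset.sum_mul_sum]
        rw [lintegral_finsetSum _ (by fun_prop)]
        refine Finset.sum_congr rfl fun x _ => ?_
        rw [lintegral_finsetSum _ (by fun_prop)]
        refine Finset.sum_congr rfl fun y _ => ?_
        rw [← lintegral_const_mul _ (by fun_prop)]
        refine lintegral_congr fun z => ?_
        ring
    _ ≤ ∑ x ∈ P, ∑ y ∈ P, w x * w y *
          (ENNReal.ofReal (2 * ρ) ^ m * slopeMeasure m {u | ‖projAlong u (x - y)‖ ≤ 2 * ρ}) := by
        gcongr with x _ y _
        exact lintegral_tube_mul_tube_le hρ0 x y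
    _ = ENNReal.ofReal (2 * ρ) ^ m * ∑ x ∈ P, ∑ y ∈ P, w x * w y *
          slopeMeasure m {u | ‖projAlong u (x - y)‖ ≤ 2 * ρ} := by
        simp only [Finset.mul_sum, mul_left_comm]
    _ ≤ ENNReal.ofReal (2 * ρ) ^ m *
          (energyConst m t * ENNReal.ofReal (2 * ρ) ^ m * ∑ x ∈ P, w x) := by
        gcongr
        exact discrete_energy_le hP hw (by linarith)
    _ = energyConst m t * (ENNReal.ofReal (2 * ρ) ^ m) ^ 2 * ∑ x ∈ P, w x := by ring

end Tubes

section LipschitzSnd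
variable {V W : Type*} [PseudoMetricSpace W]

/-- Lipschitz continuity in the second variable, uniformly in the first, for extended nonnegative
functions. (`ℝ≥0∞` carries no metric for `LipschitzWith` to refer to.) -/
def LipschitzSnd (f : V × W → ℝ≥0∞) : Prop :=
  ∃ C : ℝ≥0∞, C ≠ ∞ ∧ ∀ u v v', f (u, v) ≤ f (u, v') + C * edist v v'

lemma LipschitzSnd.add {f g : V × W → ℝ≥0∞} (hf : LipschitzSnd f) (hg : LipschitzSnd g) :
    LipschitzSnd fun z => f z + g z := by
  obtain ⟨C, hC, hf⟩ := hf
  obtain ⟨D, hD, hg⟩ := hg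
  refine ⟨C + D, by finiteness, fun u v v' => ?_⟩
  calc f (u, v) + g (u, v) ≤ (f (u, v') + C * edist v v') + (g (u, v') + D * edist v v') :=
        add_le_add (hf u v v') (hg u v v')
    _ = f (u, v') + g (u, v') + (C + D) * edist v v' := by ring

lemma LipschitzSnd.tsub {f g : V × W → ℝ≥0∞} (hf : LipschitzSnd f) (hg : LipschitzSnd g) :
    LipschitzSnd fun z => f z - g z := by
  obtain ⟨C, hC, hf⟩ := hf
  obtain ⟨D, hD, hg⟩ := hg
  refine ⟨C + D, by finiteness, fun u v v' => ?_⟩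
  have hg := hg u v' v
  rw [edist_comm] at hg
  rw [tsub_le_iff_right]
  calc f (u, v) ≤ f (u, v') + C * edist v v' := hf u v v'
    _ ≤ (f (u, v') - g (u, v') + g (u, v')) + C * edist v v' := by gcongr; exact le_tsub_add
    _ ≤ (f (u, v') - g (u, v') + (g (u, v) + D * edist v v')) + C * edist v v' := by gcongr
    _ = f (u, v') - g (u, v') + (C + D) * edist v v' + g (u, v) := by ring

end LipschitzSnd

section Capacity
variable {m : ℕ}

lemma mul_lintegral_comp_projAlong_le {h : (Fin m → ℝ) × (Fin m → ℝ) → ℝ≥0∞} (hm : Measurable h)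
    {C : ℝ≥0∞} (hC : ∀ u v v', h (u, v) ≤ h (u, v') + C * edist v v') {ρ : ℝ} (hρ : 0 ≤ ρ)
    (x : (Fin m → ℝ) × ℝ) :
    ENNReal.ofReal (2 * ρ) ^ m * ∫⁻ u, h (u, projAlong u x) ∂slopeMeasure m ≤
      ∫⁻ z, h z * tube ρ x z ∂(slopeMeasure m).prod volume +
        ENNReal.ofReal (2 * ρ) ^ m * (C * ENNReal.ofReal ρ * slopeMeasure m univ) := by
  set c := ENNReal.ofReal (2 * ρ) ^ m
  have hvol (v : Fin m → ℝ) : volume (closedBall v ρ) = c := by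
    rw [Real.volume_pi_closedBall _ hρ, Fintype.card_fin, ENNReal.ofReal_pow (by positivity)]
  have hslice (u) : c * h (u, projAlong u x) ≤
      (∫⁻ v, h (u, v) * tube ρ x (u, v)) + c * (C * ENNReal.ofReal ρ) := by
    calc c * h (u, projAlong u x)
        = ∫⁻ _ in closedBall (projAlong u x) ρ, h (u, projAlong u x) := by
          rw [setLIntegral_const, hvol, mul_comm]
      _ ≤ ∫⁻ v in closedBall (projAlong u x) ρ, (h (u, v) + C * ENNReal.ofReal ρ) := by
          refine setLIntegral_mono' measurableSet_closedBall fun v hv => (hC u _ v).trans ?_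
          gcongr
          rw [edist_comm, edist_dist]
          exact ENNReal.ofReal_le_ofReal hv
      _ = (∫⁻ v, h (u, v) * tube ρ x (u, v)) + c * (C * ENNReal.ofReal ρ) := by
          rw [lintegral_add_right _ measurable_const, setLIntegral_const, hvol,
            lintegral_mul_tube _ _ _ fun v => h (u, v), mul_comm c]
  rw [← lintegral_const_mul _ (by fun_prop), lintegral_prod _ (by fun_prop)]
  refine (lintegral_mono hslice).trans ?_
  rw [lintegral_add_right _ measurable_const, lintegral_const, mul_assoc c]

lemma le_mul_lintegral_sq_div_of_le_lintegral_mul {α : Type*} [MeasurableSpace α] {μ : Measure α}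
    {h G : α → ℝ≥0∞} (hm : AEMeasurable h μ) (hG : AEMeasurable G μ) {b c K M : ℝ≥0∞} (hb : b ≠ 0)
    (hb' : b ≠ ∞) (hc : c ≠ 0) (hc' : c ≠ ∞) (hM : M ≠ ∞) (hlow : c * b * M ≤ ∫⁻ z, h z * G z ∂μ)
    (henergy : ∫⁻ z, G z ^ 2 ∂μ ≤ K * c ^ 2 * M) :
    M ≤ K * ((∫⁻ z, h z ^ 2 ∂μ) / b ^ 2) := by
  rcases eq_or_ne M 0 with rfl | hM0
  · exact zero_le
  rw [← mul_div_assoc, ENNReal.le_div_iff_mul_le (by simp [hb]) (by simp [hb'])]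
  refine (ENNReal.mul_le_mul_iff_right (a := c ^ 2 * M) (by simp [hc, hM0]) (by finiteness)).1 ?_
  calc c ^ 2 * M * (M * b ^ 2) = (c * b * M) ^ 2 := by ring
    _ ≤ (∫⁻ z, h z * G z ∂μ) ^ 2 := pow_le_pow_left' hlow 2
    _ ≤ (∫⁻ z, h z ^ 2 ∂μ) * ∫⁻ z, G z ^ 2 ∂μ := lintegral_mul_sq_le _ hm hG
    _ ≤ (∫⁻ z, h z ^ 2 ∂μ) * (K * c ^ 2 * M) := by gcongr
    _ = c ^ 2 * M * (K * ∫⁻ z, h z ^ 2 ∂μ) := by ring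

lemma tendsto_const_mul_half_pow {C : ℝ≥0∞} (hC : C ≠ ∞) :
    Tendsto (fun k : ℕ => C * (1 / 2) ^ k) atTop (𝓝 0) := by
  rw [← mul_zero C]
  exact ENNReal.Tendsto.const_mul (ENNReal.tendsto_pow_atTop_nhds_zero_of_lt_one (by simp))
    (Or.inr hC)

lemma sum_weights_le {t : ℝ} {h : (Fin m → ℝ) × (Fin m → ℝ) → ℝ≥0∞} (hm : Measurable h)
    {C : ℝ≥0∞} (hC : ∀ u v v', h (u, v) ≤ h (u, v') + C * edist v v') {b : ℝ≥0∞} (hb : b ≠ 0)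
    (hb' : b ≠ ∞) {P : Finset ((Fin m → ℝ) × ℝ)} (hP : ∀ x ∈ P, ∀ y ∈ P, dist x y ≤ 1)
    (hPh : ∀ x ∈ P, 2 * b ≤ ∫⁻ u, h (u, projAlong u x) ∂slopeMeasure m) {J : ℕ}
    (hJ : C * slopeMeasure m univ * (1 / 2) ^ J ≤ b) {w : (Fin m → ℝ) × ℝ → ℝ≥0}
    (hw : ∀ y ∈ P, ∀ k ≤ J,
      ∑ x ∈ P with dist x y ≤ (1 / 2) ^ k, (w x : ℝ≥0∞) ≤ ((1 / 2 : ℝ≥0∞) ^ k) ^ t) :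
    ∑ x ∈ P, (w x : ℝ≥0∞) ≤
      energyConst m t * ((∫⁻ z, h z ^ 2 ∂(slopeMeasure m).prod volume) / b ^ 2) := by
  set ρ : ℝ := (1 / 2) ^ J with hρ
  have hρ0 : 0 < ρ := by positivity
  set c := ENNReal.ofReal (2 * ρ) ^ m
  have hc : c ≠ 0 := pow_ne_zero _ (by simpa using hρ0)
  have hc' : c ≠ ∞ := by finiteness
  have hpair (x) (hx : x ∈ P) : c * b ≤ ∫⁻ z, h z * tube ρ x z ∂(slopeMeasure m).prod volume := by
    refine (ENNReal.add_le_add_iff_right (a := c * b) (by finiteness)).1 ?_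
    calc c * b + c * b = c * (2 * b) := by ring
      _ ≤ c * ∫⁻ u, h (u, projAlong u x) ∂slopeMeasure m := by gcongr; exact hPh x hx
      _ ≤ _ := mul_lintegral_comp_projAlong_le hm hC hρ0.le x
      _ ≤ ∫⁻ z, h z * tube ρ x z ∂(slopeMeasure m).prod volume + c * b := by
          gcongr
          rw [hρ, ofReal_half_pow, mul_right_comm]
          exact hJ
  refine le_mul_lintegral_sq_div_of_le_lintegral_mul (G := fun z => ∑ x ∈ P, w x * tube ρ x z)
    hm.aemeasurable (by fun_prop) hb hb' hc hc' (by simp) ?_ (lintegral_sum_tube_sq_le hP hw le_rfl)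
  calc c * b * ∑ x ∈ P, (w x : ℝ≥0∞) = ∑ x ∈ P, (w x : ℝ≥0∞) * (c * b) := by
        rw [← Finset.sum_mul, mul_comm]
    _ ≤ ∑ x ∈ P, (w x : ℝ≥0∞) * ∫⁻ z, h z * tube ρ x z ∂(slopeMeasure m).prod volume := by
        gcongr with x hx
        exact hpair x hx
    _ = ∫⁻ z, h z * ∑ x ∈ P, w x * tube ρ x z ∂(slopeMeasure m).prod volume := by
        simp_rw [Finset.mul_sum]
        rw [lintegral_finsetSum _ (by fun_prop)]
        refine Finset.sum_congr rfl fun x _ => ?_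
        rw [← lintegral_const_mul _ (by fun_prop)]
        simp only [mul_left_comm]

lemma hausdorffContent_superlevel_le {t : ℝ} (ht : 0 ≤ t)
    {h : (Fin m → ℝ) × (Fin m → ℝ) → ℝ≥0∞} (hm : Measurable h) (hh : LipschitzSnd h)
    {b : ℝ≥0∞} (hb : b ≠ 0) (hb' : b ≠ ∞) (x₀ : (Fin m → ℝ) × ℝ) :
    hausdorffContent _ t
        {x ∈ ball x₀ (1 / 2) | 2 * b < ∫⁻ u, h (u, projAlong u x) ∂slopeMeasure m} ≤
      12 ^ t * energyConst m t *
        ((∫⁻ z, h z ^ 2 ∂(slopeMeasure m).prod volume) / b ^ 2) := by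
  set E := {x ∈ ball x₀ (1 / 2) | 2 * b < ∫⁻ u, h (u, projAlong u x) ∂slopeMeasure m}
  obtain ⟨C, hC, hlip⟩ := hh
  obtain ⟨J, hJ⟩ := ((tendsto_const_mul_half_pow
    (C := C * slopeMeasure m univ) (by finiteness)).eventually_le_const
      (pos_iff_ne_zero.2 hb)).exists
  have hE : TotallyBounded E := (isCompact_closedBall x₀ (1 / 2)).totallyBounded.subset
    ((sep_subset _ _).trans ball_subset_closedBall)
  obtain ⟨P, hPE, hPfin, hEP⟩ := finite_approx_of_totallyBounded hE ((1 / 2) ^ J) (by positivity)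
  lift P to Finset ((Fin m → ℝ) × ℝ) using hPfin
  have hP (x) (hx : x ∈ P) (y) (hy : y ∈ P) : dist x y ≤ 1 := by
    have hx₀ := mem_ball.1 (hPE hx).1
    have hy₀ := mem_ball.1 (hPE hy).1
    linarith [dist_triangle_right x y x₀]
  obtain ⟨w, hw, hcontent⟩ := exists_discrete_frostman ht P J
  calc hausdorffContent _ t E
      ≤ hausdorffContent _ t (⋃ x ∈ P, closedBall x ((1 / 2) ^ J)) :=
        measure_mono (hEP.trans (iUnion₂_mono fun x _ => ball_subset_closedBall))
    _ ≤ 12 ^ t * ∑ x ∈ P, (w x : ℝ≥0∞) := hcontent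
    _ ≤ _ := by
        rw [mul_assoc]
        gcongr
        exact sum_weights_le hm hlip hb hb' hP (fun x hx => (hPE hx).2.le) hJ hw

lemma hausdorffMeasure_not_eventually_le_eq_zero {t : ℝ} (ht : (m : ℝ) < t) {ι : Type*}
    [Countable ι] {h : ι → (Fin m → ℝ) × (Fin m → ℝ) → ℝ≥0∞} (hm : ∀ i, Measurable (h i))
    (hh : ∀ i, LipschitzSnd (h i)) {b : ι → ℝ≥0∞} (hb : ∀ i, b i ≠ 0) (hb' : ∀ i, b i ≠ ∞)
    (hsum : ∑' i, (∫⁻ z, h i z ^ 2 ∂(slopeMeasure m).prod volume) / b i ^ 2 ≠ ∞) :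
    μH[t] {x : (Fin m → ℝ) × ℝ |
      ¬ ∀ᶠ i in cofinite, ∫⁻ u, h i (u, projAlong u x) ∂slopeMeasure m ≤ 2 * b i} = 0 := by
  have ht0 : 0 < t := m.cast_nonneg.trans_lt ht
  refine measure_null_of_locally_null _ fun x₀ _ =>
    ⟨_, inter_mem_nhdsWithin _ (ball_mem_nhds x₀ (by norm_num : (0 : ℝ) < 1 / 2)), ?_⟩
  refine hausdorffMeasure_eq_zero_of_hausdorffContent_eq_zero ht0 ?_
  set S : ι → Set ((Fin m → ℝ) × ℝ) := fun i =>
    {x ∈ ball x₀ (1 / 2) | 2 * b i < ∫⁻ u, h i (u, projAlong u x) ∂slopeMeasure m}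
  have hS : hausdorffContent _ t (limsup S cofinite) = 0 := by
    refine measure_limsup_cofinite_eq_zero (ne_top_of_le_ne_top ?_ (ENNReal.tsum_le_tsum fun i =>
      hausdorffContent_superlevel_le ht0.le (hm i) (hh i) (hb i) (hb' i) x₀))
    rw [ENNReal.tsum_mul_left]
    have := energyConst_ne_top ht
    exact ENNReal.mul_ne_top (by finiteness) hsum
  refine measure_mono_null ?_ hS
  rintro x ⟨hx, hx'⟩
  rw [mem_limsup_iff_frequently_mem]
  exact (not_eventually.1 hx).mono fun i hi => ⟨hx', not_le.1 hi⟩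

end Capacity

section Bump

/-- Lipschitz approximations of the indicator function of an open set from below. -/
noncomputable def bump {Z : Type*} [PseudoEMetricSpace Z] (O : Set Z) (j : ℕ) (z : Z) : ℝ≥0∞ :=
  min 1 (j * infEDist z Oᶜ)

lemma measurable_bump {Z : Type*} [PseudoEMetricSpace Z] [MeasurableSpace Z]
    [OpensMeasurableSpace Z] (O : Set Z) (j : ℕ) : Measurable (bump O j) :=
  measurable_const.min (measurable_const.mul measurable_infEDist)

lemma lipschitzSnd_bump {V W : Type*} [PseudoMetricSpace V] [PseudoMetricSpace W] (O : Set (V × W))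
    (j : ℕ) : LipschitzSnd (bump O j) := by
  refine ⟨j, by simp, fun u v v' => ?_⟩
  have hdist : infEDist (u, v) Oᶜ ≤ infEDist (u, v') Oᶜ + edist v v' := by
    simpa [Prod.edist_eq] using
      infEDist_le_infEDist_add_edist (s := Oᶜ) (x := (u, v)) (y := (u, v'))
  calc bump O j (u, v) ≤ min 1 (j * infEDist (u, v') Oᶜ + j * edist v v') := by
        rw [← mul_add]; unfold bump; gcongr
    _ ≤ bump O j (u, v') + j * edist v v' := by
        rw [bump, ← min_add_add_right]
        exact min_le_min le_self_add le_rfl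

lemma monotone_bump {Z : Type*} [PseudoEMetricSpace Z] (O : Set Z) : Monotone (bump O) := by
  intro j k hjk z
  unfold bump
  gcongr

lemma bump_le_indicator {Z : Type*} [PseudoEMetricSpace Z] (O : Set Z) (j : ℕ) (z : Z) :
    bump O j z ≤ O.indicator 1 z := by
  by_cases hz : z ∈ O
  · simp [hz, bump]
  · simp [hz, bump, infEDist_zero_of_mem]

lemma eventually_bump_eq_indicator {Z : Type*} [PseudoEMetricSpace Z] {O : Set Z} (hO : IsOpen O)
    (z : Z) : ∀ᶠ j in atTop, bump O j z = O.indicator 1 z := by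
  by_cases hz : z ∈ O
  · have h0 : infEDist z Oᶜ ≠ 0 := by
      rw [Ne, ← mem_iff_infEDist_zero_of_closed hO.isClosed_compl]
      simpa using hz
    obtain ⟨k, hk⟩ := ENNReal.exists_nat_mul_gt h0 ENNReal.one_ne_top
    filter_upwards [eventually_ge_atTop k] with j hj
    simp only [bump, hz, indicator_of_mem, Pi.one_apply, min_eq_left_iff]
    exact hk.le.trans (by gcongr)
  · exact Eventually.of_forall fun j => by simp [hz, bump, infEDist_zero_of_mem]

lemma sq_indicator_sub_bump_le {Z : Type*} [PseudoEMetricSpace Z] (O : Set Z) (j : ℕ) (z : Z) :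
    (O.indicator 1 z - bump O j z) ^ 2 ≤ O.indicator 1 z := by
  by_cases hz : z ∈ O
  · simp only [hz, indicator_of_mem, Pi.one_apply]
    exact pow_le_one₀ zero_le tsub_le_self
  · simp [hz]

lemma tendsto_lintegral_sq_indicator_sub_bump {Z : Type*} [PseudoEMetricSpace Z]
    [MeasurableSpace Z] [OpensMeasurableSpace Z] {O : Set Z} (hO : IsOpen O) {μ : Measure Z}
    (hμ : μ O ≠ ∞) :
    Tendsto (fun j => ∫⁻ z, (O.indicator 1 z - bump O j z) ^ 2 ∂μ) atTop (𝓝 0) := by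
  rw [← lintegral_zero]
  refine tendsto_lintegral_of_dominated_convergence (O.indicator 1)
    (fun j => ((measurable_one.indicator hO.measurableSet).sub (measurable_bump O j)).pow_const 2)
    (fun j => Eventually.of_forall (sq_indicator_sub_bump_le O j)) ?_
    (Eventually.of_forall fun z => tendsto_const_nhds.congr' ?_)
  · rwa [lintegral_indicator_one hO.measurableSet]
  · filter_upwards [eventually_bump_eq_indicator hO z] with j hj
    simp [hj]

lemma exists_monotone_tendsto_of_forall_eventually {p : ℕ → ℕ → Prop} (h0 : p 0 0)
    (hp : ∀ l, ∀ᶠ j in atTop, p l j) :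
    ∃ q : ℕ → ℕ, Monotone q ∧ Tendsto q atTop atTop ∧ q 0 = 0 ∧ ∀ l, p l (q l) := by
  obtain ⟨φ, hφ, hφp⟩ := extraction_forall_of_eventually fun l => hp (l + 1)
  let q : ℕ → ℕ := fun l => Nat.casesOn l 0 φ
  refine ⟨q, monotone_nat_of_le_succ ?_, (tendsto_add_atTop_iff_nat 1).1 hφ.tendsto_atTop, rfl, ?_⟩
  · rintro (_ | l)
    · exact Nat.zero_le _
    · exact hφ.monotone l.le_succ
  · rintro (_ | l)
    · exact h0
    · exact hφp l

/-- The functions are the successive differences of a sequence of Lipschitz approximations of the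
indicator function. -/
lemma exists_lipschitzSnd_one_le_tsum {V W : Type*} [PseudoMetricSpace V] [PseudoMetricSpace W]
    [MeasurableSpace (V × W)] [OpensMeasurableSpace (V × W)] {O : Set (V × W)} (hO : IsOpen O)
    {μ : Measure (V × W)} {ε : ℝ≥0∞} (hε : ε ≠ 0) (hε' : ε ≠ ∞) (hμ : μ O ≤ ε) :
    ∃ d : ℕ → V × W → ℝ≥0∞, (∀ l, Measurable (d l)) ∧ (∀ l, LipschitzSnd (d l)) ∧
      (∀ l, ∫⁻ z, d l z ^ 2 ∂μ ≤ (1 / 16) ^ l * ε) ∧ ∀ z ∈ O, 1 ≤ ∑' l, d l z := by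
  obtain ⟨q, hqmono, hqtop, hq0, hq⟩ := exists_monotone_tendsto_of_forall_eventually
    (p := fun l j => ∫⁻ z, (O.indicator 1 z - bump O j z) ^ 2 ∂μ ≤ (1 / 16) ^ l * ε) (by
      refine (lintegral_mono (sq_indicator_sub_bump_le O 0)).trans ?_
      rwa [lintegral_indicator_one hO.measurableSet, pow_zero, one_mul]) (fun l =>
      (tendsto_lintegral_sq_indicator_sub_bump hO (ne_top_of_le_ne_top hε' hμ)).eventually_le_const
        (pos_iff_ne_zero.2 (mul_ne_zero (pow_ne_zero _ (by simp)) hε)))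
  refine ⟨fun l z => bump O (q (l + 1)) z - bump O (q l) z,
    fun l => (measurable_bump _ _).sub (measurable_bump _ _),
    fun l => (lipschitzSnd_bump _ _).tsub (lipschitzSnd_bump _ _), fun l => ?_, fun z hz => ?_⟩
  · refine (lintegral_mono fun z => ?_).trans (hq l)
    exact pow_le_pow_left' (tsub_le_tsub_right (bump_le_indicator _ _ _) _) 2
  · have htelescope (k : ℕ) :
        ∑ l ∈ Finset.range k, (bump O (q (l + 1)) z - bump O (q l) z) = bump O (q k) z := by
      induction k with
      | zero => simp [hq0, bump]
      | succ k ih =>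
        rw [Finset.sum_range_succ, ih]
        exact add_tsub_cancel_of_le (monotone_bump O (hqmono k.le_succ) z)
    obtain ⟨k, hk⟩ := (hqtop.eventually (eventually_bump_eq_indicator hO z)).exists
    calc (1 : ℝ≥0∞) = bump O (q k) z := by rw [hk]; simp [hz]
      _ ≤ ∑' l, (bump O (q (l + 1)) z - bump O (q l) z) := by
          rw [← htelescope]; exact ENNReal.sum_le_tsum _

end Bump

section NullSets
variable {m : ℕ}

lemma div_half_pow_sq_le {a : ℝ≥0∞} {k : ℕ} (ha : a ≤ (1 / 16) ^ k) :
    a / ((1 / 2) ^ k) ^ 2 ≤ (1 / 4) ^ k := by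
  refine ENNReal.div_le_of_le_mul (ha.trans_eq ?_)
  have h16 : (1 / 16 : ℝ≥0∞) = 1 / 4 * (1 / 2) ^ 2 := by
    simp only [one_div]
    rw [← ENNReal.inv_pow, ← ENNReal.mul_inv (by simp) (by simp)]
    norm_num
  rw [h16, mul_pow, pow_right_comm]

lemma tsum_one_div_four_pow_ne_top : (∑' k : ℕ, (1 / 4 : ℝ≥0∞) ^ k) ≠ ∞ := by
  rw [ENNReal.tsum_geometric]
  exact ENNReal.inv_ne_top.2 (tsub_pos_of_lt (by simp)).ne'

lemma tsum_div_half_pow_sq_ne_top {a : ℕ × ℕ → ℝ≥0∞} (ha : ∀ p, a p ≤ (1 / 16) ^ (p.1 + p.2)) :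
    ∑' p, a p / ((1 / 2) ^ (p.1 + p.2)) ^ 2 ≠ ∞ := by
  refine ne_top_of_le_ne_top ?_ (ENNReal.tsum_le_tsum fun p => div_half_pow_sq_le (ha p))
  rw [ENNReal.tsum_prod (f := fun k l => (1 / 4 : ℝ≥0∞) ^ (k + l))]
  simp_rw [pow_add, ENNReal.tsum_mul_left]
  rw [ENNReal.tsum_mul_right]
  exact ENNReal.mul_ne_top tsum_one_div_four_pow_ne_top tsum_one_div_four_pow_ne_top

lemma measure_le_tsum_lintegral {α : Type*} [MeasurableSpace α] {μ : Measure α} {S : Set α}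
    (hS : MeasurableSet S) {f : ℕ → α → ℝ≥0∞} (hf : ∀ l, Measurable (f l))
    (h : ∀ u ∈ S, 1 ≤ ∑' l, f l u) : μ S ≤ ∑' l, ∫⁻ u, f l u ∂μ := by
  calc μ S = ∫⁻ _ in S, 1 ∂μ := setLIntegral_one S |>.symm
    _ ≤ ∫⁻ u in S, ∑' l, f l u ∂μ := setLIntegral_mono' hS h
    _ ≤ ∫⁻ u, ∑' l, f l u ∂μ := setLIntegral_le_lintegral _ _
    _ = ∑' l, ∫⁻ u, f l u ∂μ := lintegral_tsum fun l => (hf l).aemeasurable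

lemma eventually_atTop_forall_of_eventually_cofinite {p : ℕ → ℕ → Prop}
    (h : ∀ᶠ q : ℕ × ℕ in cofinite, p q.1 q.2) : ∀ᶠ k in atTop, ∀ l, p k l := by
  rw [eventually_cofinite] at h
  rw [← Nat.cofinite_eq_atTop]
  filter_upwards [(h.image Prod.fst).eventually_cofinite_notMem] with k hk l
  by_contra hkl
  exact hk ⟨(k, l), hkl, rfl⟩

lemma hausdorffMeasure_not_ae_notMem_eq_zero {t : ℝ} (ht : (m : ℝ) < t)
    {N : Set ((Fin m → ℝ) × (Fin m → ℝ))} (hN : (slopeMeasure m).prod volume N = 0) :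
    μH[t] {x : (Fin m → ℝ) × ℝ | ¬ ∀ᵐ u ∂slopeMeasure m, (u, projAlong u x) ∉ N} = 0 := by
  have hpos (k : ℕ) : (1 / 16 : ℝ≥0∞) ^ k ≠ 0 := pow_ne_zero _ (by simp)
  choose O hNO hO hOμ using fun k : ℕ =>
    N.exists_isOpen_lt_of_lt (μ := (slopeMeasure m).prod volume) ((1 / 16) ^ k)
      (by rw [hN]; exact pos_iff_ne_zero.2 (hpos k))
  choose d hdm hdlip hdi hdO using fun k => exists_lipschitzSnd_one_le_tsum (hO k) (hpos k)
    (by finiteness) (hOμ k).le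
  refine measure_mono_null ?_ (hausdorffMeasure_not_eventually_le_eq_zero ht (ι := ℕ × ℕ)
    (h := fun p => d p.1 p.2) (fun p => hdm _ _) (fun p => hdlip _ _)
    (b := fun p => (1 / 2) ^ (p.1 + p.2)) (fun p => by simp) (fun p => by finiteness)
    (tsum_div_half_pow_sq_ne_top fun p => ?_))
  swap
  · rw [add_comm, pow_add]
    exact hdi p.1 p.2
  intro x hx hev
  refine hx ?_
  have hle : ∀ᶠ k : ℕ in atTop,
      slopeMeasure m {u | (u, projAlong u x) ∈ N} ≤ 4 * (1 / 2) ^ k := by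
    filter_upwards [eventually_atTop_forall_of_eventually_cofinite (p := fun k l =>
      ∫⁻ u, d k l (u, projAlong u x) ∂slopeMeasure m ≤ 2 * (1 / 2) ^ (k + l)) hev]
      with k hk
    have hcont : Continuous fun u => (u, projAlong u x) := by fun_prop
    calc slopeMeasure m {u | (u, projAlong u x) ∈ N}
        ≤ slopeMeasure m {u | (u, projAlong u x) ∈ O k} := measure_mono fun u hu => hNO k hu
      _ ≤ ∑' l, ∫⁻ u, d k l (u, projAlong u x) ∂slopeMeasure m :=
          measure_le_tsum_lintegral ((hO k).preimage hcont).measurableSet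
            (fun l => (hdm k l).comp hcont.measurable) fun u hu => hdO k _ hu
      _ ≤ ∑' l, 2 * (1 / 2) ^ (k + l) := ENNReal.tsum_le_tsum hk
      _ = 4 * (1 / 2) ^ k := by
          simp only [one_div, pow_add, ENNReal.tsum_mul_left, ENNReal.tsum_geometric_two]
          ring
  rw [ae_iff]
  simpa using ge_of_tendsto (tendsto_const_mul_half_pow (by simp)) hle

end NullSets

section Mollifier
variable {m : ℕ}

/-- The tent function of height one and radius `2⁻ᵏ`. -/
noncomputable def tent (k : ℕ) (z : Fin m → ℝ) : ℝ≥0∞ := 1 - 2 ^ k * ‖z‖ₑ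

/-- The tent function of radius `2⁻ᵏ`, normalised to have integral one. -/
noncomputable def mollifier (k : ℕ) (z : Fin m → ℝ) : ℝ≥0∞ := tent k z / ∫⁻ z : Fin m → ℝ, tent k z

@[fun_prop]
lemma measurable_tent (k : ℕ) : Measurable (tent (m := m) k) := by
  unfold tent; fun_prop

@[fun_prop]
lemma measurable_mollifier (k : ℕ) : Measurable (mollifier (m := m) k) := by
  unfold mollifier; fun_prop

lemma enorm_le_half_pow_iff (k : ℕ) (z : Fin m → ℝ) :
    ‖z‖ₑ ≤ (1 / 2 : ℝ≥0∞) ^ k ↔ ‖z‖ ≤ (1 / 2) ^ k := by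
  rw [← ofReal_norm, ← ofReal_half_pow, ENNReal.ofReal_le_ofReal_iff (by positivity)]

lemma two_pow_mul_half_pow (k : ℕ) : (2 : ℝ≥0∞) ^ k * (1 / 2) ^ k = 1 := by
  rw [← mul_pow, ENNReal.mul_div_cancel (by simp) (by simp), one_pow]

lemma tent_eq_zero {k : ℕ} {z : Fin m → ℝ} (hz : (1 / 2) ^ k < ‖z‖) : tent k z = 0 := by
  have hz' : (1 / 2 : ℝ≥0∞) ^ k ≤ ‖z‖ₑ :=
    (lt_of_not_ge fun h => ((enorm_le_half_pow_iff k z).1 h).not_gt hz).le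
  refine tsub_eq_zero_of_le ?_
  rw [← two_pow_mul_half_pow k]
  gcongr

lemma tent_le_tent_add (k : ℕ) (z z' : Fin m → ℝ) :
    tent k z ≤ tent k z' + 2 ^ k * edist z z' := by
  have htri : ‖z'‖ₑ ≤ edist z z' + ‖z‖ₑ := by
    simpa [edist_comm z' z] using edist_triangle z' z 0
  unfold tent
  rw [tsub_le_iff_right]
  calc (1 : ℝ≥0∞) ≤ 1 - 2 ^ k * ‖z'‖ₑ + 2 ^ k * ‖z'‖ₑ := le_tsub_add
    _ ≤ 1 - 2 ^ k * ‖z'‖ₑ + 2 ^ k * (edist z z' + ‖z‖ₑ) := by gcongr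
    _ = 1 - 2 ^ k * ‖z'‖ₑ + 2 ^ k * edist z z' + 2 ^ k * ‖z‖ₑ := by ring

lemma le_lintegral_tent (m k : ℕ) :
    (1 / 2 : ℝ≥0∞) * ((1 / 2) ^ k) ^ m ≤ ∫⁻ z : Fin m → ℝ, tent k z := by
  have hvol : volume (closedBall (0 : Fin m → ℝ) ((1 / 2) ^ (k + 1))) = ((1 / 2) ^ k) ^ m := by
    rw [Real.volume_pi_closedBall _ (by positivity), Fintype.card_fin,
      show (2 : ℝ) * (1 / 2) ^ (k + 1) = (1 / 2) ^ k by ring, ENNReal.ofReal_pow (by positivity),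
      ofReal_half_pow]
  have hhalf (z : Fin m → ℝ) (hz : z ∈ closedBall 0 ((1 / 2) ^ (k + 1))) : 1 / 2 ≤ tent k z := by
    have hz' : 2 ^ k * ‖z‖ₑ ≤ 1 / 2 := by
      calc 2 ^ k * ‖z‖ₑ ≤ 2 ^ k * (1 / 2 : ℝ≥0∞) ^ (k + 1) := by
            gcongr
            rw [enorm_le_half_pow_iff]
            simpa using hz
        _ = 1 / 2 := by rw [pow_succ, ← mul_assoc, two_pow_mul_half_pow, one_mul]
    calc (1 / 2 : ℝ≥0∞) = 1 - 1 / 2 := by simp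
      _ ≤ tent k z := tsub_le_tsub_left hz' _
  calc (1 / 2 : ℝ≥0∞) * ((1 / 2) ^ k) ^ m
      = ∫⁻ _ : Fin m → ℝ in closedBall 0 ((1 / 2) ^ (k + 1)), 1 / 2 := by
        rw [setLIntegral_const, hvol]
    _ ≤ ∫⁻ z : Fin m → ℝ in closedBall 0 ((1 / 2) ^ (k + 1)), tent k z :=
        setLIntegral_mono' measurableSet_closedBall hhalf
    _ ≤ ∫⁻ z : Fin m → ℝ, tent k z := setLIntegral_le_lintegral _ _

lemma lintegral_tent_ne_zero (m k : ℕ) : ∫⁻ z : Fin m → ℝ, tent k z ≠ 0 :=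
  (lt_of_lt_of_le (pos_iff_ne_zero.2 (by simp)) (le_lintegral_tent m k)).ne'

lemma lintegral_tent_ne_top (m k : ℕ) : ∫⁻ z : Fin m → ℝ, tent k z ≠ ∞ := by
  have hsupp : (tent k).support ⊆ closedBall (0 : Fin m → ℝ) ((1 / 2) ^ k) := fun z hz => by
    rw [mem_closedBall_zero_iff]
    exact not_lt.1 fun h => hz (tent_eq_zero h)
  rw [← setLIntegral_eq_of_support_subset hsupp]
  refine ne_top_of_le_ne_top ?_ (lintegral_mono fun z => (tsub_le_self : tent k z ≤ 1))
  rw [setLIntegral_one]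
  exact measure_closedBall_lt_top.ne

lemma inv_lintegral_tent_le (m k : ℕ) : (∫⁻ z : Fin m → ℝ, tent k z)⁻¹ ≤ 2 * (2 ^ k) ^ m := by
  rw [ENNReal.inv_le_iff_inv_le]
  refine le_of_eq_of_le ?_ (le_lintegral_tent m k)
  rw [ENNReal.mul_inv (by simp) (by simp), one_div]
  simp [ENNReal.inv_pow]

lemma lintegral_mollifier (m k : ℕ) : ∫⁻ z : Fin m → ℝ, mollifier k z = 1 := by
  simp only [mollifier, div_eq_mul_inv]
  rw [lintegral_mul_const _ (by fun_prop)]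
  exact ENNReal.mul_inv_cancel (lintegral_tent_ne_zero m k) (lintegral_tent_ne_top m k)

lemma mollifier_eq_zero {k : ℕ} {z : Fin m → ℝ} (hz : (1 / 2) ^ k < ‖z‖) : mollifier k z = 0 := by
  simp [mollifier, tent_eq_zero hz]

lemma mollifier_le (k : ℕ) (z : Fin m → ℝ) : mollifier k z ≤ 2 * (2 ^ k) ^ m := by
  rw [mollifier, div_eq_mul_inv]
  exact (mul_le_of_le_one_left' tsub_le_self).trans (inv_lintegral_tent_le m k)

lemma mollifier_le_mollifier_add (k : ℕ) (z z' : Fin m → ℝ) :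
    mollifier k z ≤ mollifier k z' + 2 * (2 ^ k) ^ m * 2 ^ k * edist z z' := by
  simp only [mollifier, div_eq_mul_inv]
  set I := ∫⁻ z : Fin m → ℝ, tent k z
  calc tent k z * I⁻¹ ≤ (tent k z' + 2 ^ k * edist z z') * I⁻¹ := by
        gcongr; exact tent_le_tent_add k z z'
    _ = tent k z' * I⁻¹ + I⁻¹ * 2 ^ k * edist z z' := by ring
    _ ≤ tent k z' * I⁻¹ + 2 * (2 ^ k) ^ m * 2 ^ k * edist z z' := by
        gcongr; exact inv_lintegral_tent_le m k

/-- The cross-correlation of two mollifiers. -/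
noncomputable def corr (k l : ℕ) (s : Fin m → ℝ) : ℝ≥0∞ :=
  ∫⁻ w, mollifier k w * mollifier l (w - s)

@[fun_prop]
lemma measurable_corr (k l : ℕ) : Measurable (corr (m := m) k l) :=
  Measurable.lintegral_prod_right (f := fun s w => mollifier k w * mollifier l (w - s))
    (by fun_prop)

lemma lintegral_corr (m k l : ℕ) : ∫⁻ s : Fin m → ℝ, corr k l s = 1 := by
  unfold corr
  rw [lintegral_lintegral_swap (by fun_prop)]
  calc ∫⁻ w : Fin m → ℝ, ∫⁻ s, mollifier k w * mollifier l (w - s)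
      = ∫⁻ w : Fin m → ℝ, mollifier k w := by
        refine lintegral_congr fun w => ?_
        rw [lintegral_const_mul _ (by fun_prop), lintegral_sub_left_eq_self, lintegral_mollifier,
          mul_one]
    _ = 1 := lintegral_mollifier m k

lemma corr_eq_zero {k l : ℕ} {s : Fin m → ℝ} (hs : (1 / 2) ^ k + (1 / 2) ^ l < ‖s‖) :
    corr k l s = 0 := by
  have hzero (w) : mollifier k w * mollifier l (w - s) = 0 := by
    rcases lt_or_ge ((1 / 2) ^ k) ‖w‖ with h | h
    · rw [mollifier_eq_zero h, zero_mul]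
    · rw [mollifier_eq_zero (k := l), mul_zero]
      linarith [norm_sub_norm_le s w, norm_sub_rev s w]
  simp [corr, hzero]

lemma corr_le (k l : ℕ) (s : Fin m → ℝ) : corr k l s ≤ 2 * (2 ^ min k l) ^ m := by
  unfold corr
  rcases le_total k l with h | h
  · rw [min_eq_left h]
    calc ∫⁻ w, mollifier k w * mollifier l (w - s)
        ≤ ∫⁻ w, 2 * (2 ^ k) ^ m * mollifier l (w - s) := by
          gcongr with w; exact mollifier_le k w
      _ = 2 * (2 ^ k) ^ m := by
          rw [lintegral_const_mul _ (by fun_prop), lintegral_sub_right_eq_self,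
            lintegral_mollifier, mul_one]
  · rw [min_eq_right h]
    calc ∫⁻ w, mollifier k w * mollifier l (w - s)
        ≤ ∫⁻ w, mollifier k w * (2 * (2 ^ l) ^ m) := by
          gcongr with w; exact mollifier_le l _
      _ = 2 * (2 ^ l) ^ m := by
          rw [lintegral_mul_const _ (by fun_prop), lintegral_mollifier, one_mul]

lemma corr_le_indicator (k l : ℕ) (s : Fin m → ℝ) :
    corr k l s ≤
      {s | ‖s‖ ≤ 2 * (1 / 2) ^ min k l}.indicator (fun _ => 2 * (2 ^ min k l) ^ m) s := by
  by_cases hs : ‖s‖ ≤ 2 * (1 / 2) ^ min k l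
  · rw [indicator_of_mem (by exact hs)]
    exact corr_le k l s
  · have hle (i : ℕ) (hi : min k l ≤ i) : (1 / 2 : ℝ) ^ i ≤ (1 / 2) ^ min k l :=
      pow_le_pow_of_le_one (by norm_num) (by norm_num) hi
    rw [corr_eq_zero]
    · exact zero_le
    · linarith [not_le.1 hs, hle k (min_le_left k l), hle l (min_le_right k l)]

lemma lintegral_corr_projAlong_le (k l : ℕ) (w : (Fin m → ℝ) × ℝ) :
    ∫⁻ u, corr k l (projAlong u w) ∂slopeMeasure m ≤
      2 * 2 ^ m * transversalityConst m * ‖w‖ₑ ^ (-(m : ℝ)) := by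
  set j := min k l
  have hm : MeasurableSet {u : Fin m → ℝ | ‖projAlong u w‖ ≤ 2 * (1 / 2) ^ j} :=
    (isClosed_le (by fun_prop) continuous_const).measurableSet
  have hradius : ENNReal.ofReal (2 * (1 / 2) ^ j) = 2 * (1 / 2) ^ j := by
    rw [ENNReal.ofReal_mul (by norm_num), ofReal_half_pow, ENNReal.ofReal_ofNat]
  calc ∫⁻ u, corr k l (projAlong u w) ∂slopeMeasure m
      ≤ 2 * (2 ^ j) ^ m * slopeMeasure m {u | ‖projAlong u w‖ ≤ 2 * (1 / 2) ^ j} := by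
        rw [← lintegral_indicator_const hm]
        exact lintegral_mono fun u => corr_le_indicator k l (projAlong u w)
    _ ≤ 2 * (2 ^ j) ^ m *
          (transversalityConst m * (ENNReal.ofReal (2 * (1 / 2) ^ j) / ‖w‖ₑ) ^ m) := by
        gcongr
        exact slopeMeasure_norm_projAlong_le w (by positivity)
    _ = 2 * 2 ^ m * transversalityConst m * (2 ^ j * (1 / 2) ^ j) ^ m * (‖w‖ₑ ^ m)⁻¹ := by
        rw [hradius, div_eq_mul_inv, mul_pow _ (‖w‖ₑ⁻¹), ENNReal.inv_pow]; ring
    _ = 2 * 2 ^ m * transversalityConst m * ‖w‖ₑ ^ (-(m : ℝ)) := by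
        rw [two_pow_mul_half_pow, one_pow, mul_one, ENNReal.rpow_neg, ENNReal.rpow_natCast]

end Mollifier

section ApproximateIdentity

lemma lintegral_mul_mem_Icc {α : Type*} [MeasurableSpace α] {μ : Measure α} {D ψ : α → ℝ≥0∞}
    (hψ : Measurable ψ) (hψ' : ∫⁻ u, ψ u ∂μ ≠ ∞) {a ε : ℝ≥0∞}
    (hD : ∀ u, ψ u ≠ 0 → D u ∈ Icc (a - ε) (a + ε)) :
    ∫⁻ u, D u * ψ u ∂μ ∈
      Icc ((∫⁻ u, ψ u ∂μ) * a - (∫⁻ u, ψ u ∂μ) * ε) ((∫⁻ u, ψ u ∂μ) * a + (∫⁻ u, ψ u ∂μ) * ε) := by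
  rw [← ENNReal.mul_sub fun _ _ => hψ', ← mul_add, mul_comm, ← lintegral_const_mul _ hψ,
    mul_comm _ (a + ε), ← lintegral_const_mul _ hψ]
  constructor <;> refine lintegral_mono fun u => ?_ <;> rcases eq_or_ne (ψ u) 0 with hu | hu
  · simp [hu]
  · exact mul_le_mul_left (hD u hu).1 _
  · simp [hu]
  · exact mul_le_mul_left (hD u hu).2 _

lemma tendsto_lintegral_mul_of_support_tendsto {α ι : Type*} [MeasurableSpace α]
    [TopologicalSpace α] {μ : Measure α} {l : Filter ι} {ψ : ι → α → ℝ≥0∞}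
    (hψ : ∀ i, Measurable (ψ i)) {c : ℝ≥0∞} (hc : c ≠ ∞) (hψc : ∀ i, ∫⁻ u, ψ i u ∂μ = c) {u₀ : α}
    (hsupp : Tendsto (fun i => Function.support (ψ i)) l (𝓝 u₀).smallSets) {D : α → ℝ≥0∞}
    (hD : ContinuousAt D u₀) (hD₀ : D u₀ ≠ ∞) :
    Tendsto (fun i => ∫⁻ u, D u * ψ i u ∂μ) l (𝓝 (c * D u₀)) := by
  rw [ENNReal.tendsto_nhds (by finiteness)]
  intro ε hε
  obtain ⟨δ, hδ, hδε⟩ : ∃ δ : ℝ≥0∞, 0 < δ ∧ c * δ ≤ ε := by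
    refine ⟨ε / (c + 1), ENNReal.div_pos hε.ne' (by finiteness), ?_⟩
    calc c * (ε / (c + 1)) ≤ (c + 1) * (ε / (c + 1)) := by gcongr; exact le_self_add
      _ = ε := ENNReal.mul_div_cancel (by simp) (by finiteness)
  have hnear : {u | D u ∈ Icc (D u₀ - δ) (D u₀ + δ)} ∈ 𝓝 u₀ :=
    (ENNReal.tendsto_nhds hD₀).1 hD δ hδ
  filter_upwards [tendsto_smallSets_iff.1 hsupp _ hnear] with i hi
  have hmem := lintegral_mul_mem_Icc (hψ i) (by rwa [hψc]) fun u hu => hi hu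
  rw [hψc] at hmem
  exact Icc_subset_Icc (tsub_le_tsub_left hδε _) (by gcongr) hmem

end ApproximateIdentity

section LineDensity
variable {m : ℕ}

/-- The density at `w` of the push-forward of `slopeMeasure m ⊗ volume` under
`(u, r) ↦ r • (u, 1)`, that is, the kernel of averaging over the lines through a point. -/
noncomputable def lineKernel (w : (Fin m → ℝ) × ℝ) : ℝ≥0∞ :=
  ENNReal.ofReal |(w.2 ^ m)⁻¹| * ENNReal.ofReal (slopeDensity (lineSlope w))

lemma lintegral_comp_projAlong {w : (Fin m → ℝ) × ℝ} (hw : w.2 ≠ 0) {f : (Fin m → ℝ) → ℝ≥0∞}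
    (hf : Measurable f) :
    ∫⁻ u, f (projAlong u w) = ENNReal.ofReal |(w.2 ^ m)⁻¹| * ∫⁻ v, f v := by
  calc ∫⁻ u, f (projAlong u w) = ∫⁻ v, f (w.1 - v) ∂Measure.map (w.2 • ·) volume := by
        rw [lintegral_map (by fun_prop) (by fun_prop)]; rfl
    _ = ENNReal.ofReal |(w.2 ^ m)⁻¹| * ∫⁻ v, f v := by
        rw [Measure.map_addHaar_smul _ hw, lintegral_smul_measure, lintegral_sub_left_eq_self]
        simp

lemma tendsto_lintegral_comp_projAlong {ι : Type*} {l : Filter ι} {ψ : ι → (Fin m → ℝ) → ℝ≥0∞}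
    (hψ : ∀ i, Measurable (ψ i)) (hψ₁ : ∀ i, ∫⁻ v, ψ i v = 1) {r : ι → ℝ}
    (hsupp : ∀ i v, r i < ‖v‖ → ψ i v = 0) (hr : Tendsto r l (𝓝 0)) {w : (Fin m → ℝ) × ℝ}
    (hw : w.2 ≠ 0) :
    Tendsto (fun i => ∫⁻ u, ψ i (projAlong u w) ∂slopeMeasure m) l (𝓝 (lineKernel w)) := by
  have hD : Continuous fun u : Fin m → ℝ => ENNReal.ofReal (slopeDensity u) :=
    ENNReal.continuous_ofReal.comp continuous_slopeDensity
  have hψu (i : ι) : Measurable fun u => ψ i (projAlong u w) := (hψ i).comp (by fun_prop)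
  have hsmall : Tendsto (fun i => Function.support fun u => ψ i (projAlong u w)) l
      (𝓝 (lineSlope w)).smallSets := by
    rw [nhds_basis_ball.smallSets.tendsto_right_iff]
    intro δ hδ
    filter_upwards [hr.eventually_lt_const (mul_pos (abs_pos.2 hw) hδ)] with i hi u hu
    have hle : ‖projAlong u w‖ ≤ r i := not_lt.1 fun h => hu (hsupp i _ h)
    rw [norm_projAlong_eq hw] at hle
    exact lt_of_mul_lt_mul_left (hle.trans_lt hi) (abs_nonneg _)
  refine (tendsto_lintegral_mul_of_support_tendsto hψu (by finiteness)
    (fun i => by rw [lintegral_comp_projAlong hw (hψ i), hψ₁, mul_one]) hsmall hD.continuousAt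
    (by finiteness)).congr fun i => ?_
  rw [slopeMeasure, lintegral_withDensity_eq_lintegral_mul _ hD.measurable (hψu i)]
  rfl

/-- The density of the measure `μ` along the lines with direction `(u, 1)`, mollified at scale
`2⁻ᵏ`; the line is parametrised by its slope and its trace on `ℝᵐ × {0}`. -/
noncomputable def lineDensity (μ : Measure ((Fin m → ℝ) × ℝ)) (k : ℕ)
    (z : (Fin m → ℝ) × (Fin m → ℝ)) : ℝ≥0∞ :=
  ∫⁻ y, mollifier k (projAlong z.1 y - z.2) ∂μ

@[fun_prop]
lemma measurable_lineDensity (μ : Measure ((Fin m → ℝ) × ℝ)) [SFinite μ] (k : ℕ) :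
    Measurable (lineDensity μ k) :=
  Measurable.lintegral_prod_right (f := fun (z : (Fin m → ℝ) × (Fin m → ℝ)) y =>
    mollifier k (projAlong z.1 y - z.2)) (by fun_prop)

lemma lipschitzSnd_lineDensity (μ : Measure ((Fin m → ℝ) × ℝ)) [IsFiniteMeasure μ] (k : ℕ) :
    LipschitzSnd (lineDensity μ k) := by
  refine ⟨2 * (2 ^ k) ^ m * 2 ^ k * μ univ, by finiteness, fun u v v' => ?_⟩
  calc lineDensity μ k (u, v)
      ≤ ∫⁻ y, (mollifier k (projAlong u y - v') + 2 * (2 ^ k) ^ m * 2 ^ k * edist v v') ∂μ := by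
        refine lintegral_mono fun y =>
          (mollifier_le_mollifier_add k _ (projAlong u y - v')).trans_eq ?_
        rw [edist_sub_left]
    _ = lineDensity μ k (u, v') + 2 * (2 ^ k) ^ m * 2 ^ k * μ univ * edist v v' := by
        rw [lintegral_add_right _ measurable_const, lintegral_const, lineDensity]; ring

lemma lineDensity_ne_top (μ : Measure ((Fin m → ℝ) × ℝ)) [IsFiniteMeasure μ] (k : ℕ)
    (z : (Fin m → ℝ) × (Fin m → ℝ)) : lineDensity μ k z ≠ ∞ := by
  refine ne_top_of_le_ne_top ?_ (lintegral_mono fun y => mollifier_le k _)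
  rw [lintegral_const]
  finiteness

lemma lintegral_mollifier_mul_mollifier_mul (μ : Measure ((Fin m → ℝ) × ℝ)) [SFinite μ] (k l : ℕ)
    {G : ((Fin m → ℝ) × ℝ) × ((Fin m → ℝ) × ℝ) → ℝ≥0∞} (hG : Measurable G) :
    ∫⁻ z, ∫⁻ p, mollifier k (projAlong z.1 p.1 - z.2) * mollifier l (projAlong z.1 p.2 - z.2) *
        G p ∂μ.prod μ ∂(slopeMeasure m).prod volume =
      ∫⁻ p, (∫⁻ u, corr k l (projAlong u (p.1 - p.2)) ∂slopeMeasure m) * G p ∂μ.prod μ := by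
  rw [lintegral_lintegral_swap (by fun_prop)]
  refine lintegral_congr fun p => ?_
  rw [lintegral_mul_const _ (by fun_prop)]
  congr 1
  rw [lintegral_prod _ (by fun_prop)]
  refine lintegral_congr fun u => ?_
  rw [corr, ← lintegral_sub_left_eq_self _ (projAlong u p.1)]
  refine lintegral_congr fun v => ?_
  dsimp only
  rw [projAlong_sub, sub_sub_self, sub_sub_eq_add_sub, sub_sub_eq_add_sub, add_comm v]

lemma lintegral_lineDensity_mul (μ : Measure ((Fin m → ℝ) × ℝ)) [SFinite μ] (k l : ℕ) :
    ∫⁻ z, lineDensity μ k z * lineDensity μ l z ∂(slopeMeasure m).prod volume =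
      ∫⁻ p, ∫⁻ u, corr k l (projAlong u (p.1 - p.2)) ∂slopeMeasure m ∂μ.prod μ := by
  have hpair := lintegral_mollifier_mul_mollifier_mul μ k l (G := fun _ => 1) measurable_const
  simp only [mul_one] at hpair
  rw [← hpair]
  refine lintegral_congr fun z => ?_
  rw [lineDensity, lineDensity, ← lintegral_prod_mul (by fun_prop) (by fun_prop)]

end LineDensity

section RieszEnergy

lemma rpow_le_one_add_tsum {q : ℝ} (hq : 0 ≤ q) (a : ℝ≥0∞) :
    a ^ q ≤ 1 + ∑' k : ℕ, {a | 2 ^ k ≤ a}.indicator (fun _ => ((2 : ℝ≥0∞) ^ (k + 1)) ^ q) a := by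
  rcases le_or_gt a 1 with ha | ha
  · exact le_add_right (ENNReal.rpow_le_one ha hq)
  refine le_add_left ?_
  rcases eq_or_ne a ∞ with rfl | htop
  · have hsum : ∑' k : ℕ, {a : ℝ≥0∞ | 2 ^ k ≤ a}.indicator
        (fun _ => ((2 : ℝ≥0∞) ^ (k + 1)) ^ q) ∞ = ∞ := by
      rw [eq_top_iff, ← ENNReal.tsum_const_eq_top_of_ne_zero (α := ℕ) one_ne_zero]
      refine ENNReal.tsum_le_tsum fun k => ?_
      rw [indicator_of_mem (by simp)]
      simpa using ENNReal.rpow_le_rpow (one_le_pow₀ one_le_two : (1 : ℝ≥0∞) ≤ 2 ^ (k + 1)) hq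
    exact le_top.trans_eq hsum.symm
  · lift a to ℝ≥0 using htop
    obtain ⟨k, hle, hlt⟩ := exists_nat_pow_near (mod_cast ha.le : 1 ≤ a) one_lt_two
    have hle' : (2 : ℝ≥0∞) ^ k ≤ a := mod_cast hle
    have hlt' : (a : ℝ≥0∞) ≤ 2 ^ (k + 1) := mod_cast hlt.le
    calc (a : ℝ≥0∞) ^ q ≤ ((2 : ℝ≥0∞) ^ (k + 1)) ^ q := ENNReal.rpow_le_rpow hlt' hq
      _ = {a : ℝ≥0∞ | 2 ^ k ≤ a}.indicator (fun _ => ((2 : ℝ≥0∞) ^ (k + 1)) ^ q) a :=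
          (indicator_of_mem (s := {a : ℝ≥0∞ | 2 ^ k ≤ a}) hle' fun _ => (2 ^ (k + 1)) ^ q).symm
      _ ≤ _ := ENNReal.le_tsum k

lemma two_pow_le_inv_edist_iff {X : Type*} [PseudoMetricSpace X] (k : ℕ) (y z : X) :
    2 ^ k ≤ (edist y z)⁻¹ ↔ z ∈ closedBall y ((1 / 2) ^ k) := by
  rw [ENNReal.le_inv_iff_le_inv, mem_closedBall, dist_comm,
    ← ENNReal.ofReal_le_ofReal_iff (by positivity), ofReal_half_pow, ← edist_dist, one_div,
    ENNReal.inv_pow]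

lemma tsum_two_pow_rpow_mul_half_pow_rpow_ne_top {s q : ℝ} (hq : 0 ≤ q) (hqs : q < s) :
    ∑' k : ℕ, ((2 : ℝ≥0∞) ^ (k + 1)) ^ q * ((1 / 2) ^ k) ^ s ≠ ∞ := by
  have h2q : (2 : ℝ≥0∞) ^ q ≠ ∞ := by finiteness
  have hratio : (2 : ℝ≥0∞) ^ q * (1 / 2) ^ s < 1 := by
    calc (2 : ℝ≥0∞) ^ q * (1 / 2) ^ s < 2 ^ q * (1 / 2) ^ q :=
          ENNReal.mul_lt_mul_right (by simp) h2q
            (ENNReal.rpow_lt_rpow_of_exponent_gt (by simp) (by simp) hqs)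
      _ = 1 := by
          rw [← ENNReal.mul_rpow_of_nonneg _ _ hq, ENNReal.mul_div_cancel (by simp) (by simp),
            ENNReal.one_rpow]
  have hterm (k : ℕ) : ((2 : ℝ≥0∞) ^ (k + 1)) ^ q * ((1 / 2) ^ k) ^ s =
      2 ^ q * (2 ^ q * (1 / 2) ^ s) ^ k := by
    rw [pow_succ', ENNReal.mul_rpow_of_nonneg _ _ hq, mul_pow]
    simp only [← ENNReal.rpow_natCast_mul, mul_comm (k : ℝ), ENNReal.rpow_mul_natCast]
    ring
  simp_rw [hterm]
  rw [ENNReal.tsum_mul_left, ENNReal.tsum_geometric]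
  exact ENNReal.mul_ne_top h2q (ENNReal.inv_ne_top.2 (tsub_pos_of_lt hratio).ne')

lemma exists_lintegral_edist_rpow_le {X : Type*} [PseudoMetricSpace X] [MeasurableSpace X]
    [OpensMeasurableSpace X] {s q : ℝ} (hq : 0 ≤ q) (hqs : q < s) {μ : Measure X}
    [IsFiniteMeasure μ] (hμ : IsFrostman μ s) : ∃ M ≠ ∞, ∀ y, ∫⁻ z, edist y z ^ (-q) ∂μ ≤ M := by
  obtain ⟨C, hC, hball⟩ := hμ
  refine ⟨μ univ + C * ∑' k : ℕ, ((2 : ℝ≥0∞) ^ (k + 1)) ^ q * ((1 / 2) ^ k) ^ s,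
    ENNReal.add_ne_top.2 ⟨by finiteness,
      ENNReal.mul_ne_top hC (tsum_two_pow_rpow_mul_half_pow_rpow_ne_top hq hqs)⟩, fun y => ?_⟩
  have hpoint (z : X) : edist y z ^ (-q) ≤ 1 + ∑' k : ℕ,
      (closedBall y ((1 / 2) ^ k)).indicator (fun _ => ((2 : ℝ≥0∞) ^ (k + 1)) ^ q) z := by
    rw [ENNReal.rpow_neg, ← ENNReal.inv_rpow]
    classical
    simpa only [indicator_apply, mem_ofPred_eq, two_pow_le_inv_edist_iff] using
      rpow_le_one_add_tsum hq (edist y z)⁻¹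
  calc ∫⁻ z, edist y z ^ (-q) ∂μ
      ≤ ∫⁻ z, (1 + ∑' k : ℕ,
          (closedBall y ((1 / 2) ^ k)).indicator (fun _ => ((2 : ℝ≥0∞) ^ (k + 1)) ^ q) z) ∂μ :=
        lintegral_mono hpoint
    _ = μ univ + ∑' k : ℕ, ((2 : ℝ≥0∞) ^ (k + 1)) ^ q * μ (closedBall y ((1 / 2) ^ k)) := by
        rw [lintegral_add_left measurable_const, lintegral_one, lintegral_tsum fun k =>
          (measurable_const.indicator measurableSet_closedBall).aemeasurable]
        simp only [lintegral_indicator_const measurableSet_closedBall]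
    _ ≤ μ univ + ∑' k : ℕ, ((2 : ℝ≥0∞) ^ (k + 1)) ^ q * (C * ((1 / 2) ^ k) ^ s) := by
        gcongr with k
        rw [← ofReal_half_pow k]
        exact hball y _ (by positivity)
    _ = μ univ + C * ∑' k : ℕ, ((2 : ℝ≥0∞) ^ (k + 1)) ^ q * ((1 / 2) ^ k) ^ s := by
        simp only [mul_left_comm _ C, ENNReal.tsum_mul_left]

lemma lintegral_enorm_sub_rpow_ne_top {E : Type*} [SeminormedAddCommGroup E] [MeasurableSpace E]
    [BorelSpace E] [SecondCountableTopology E] {s q : ℝ} (hq : 0 ≤ q) (hqs : q < s) {μ : Measure E}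
    [IsFiniteMeasure μ] (hμ : IsFrostman μ s) : ∫⁻ p, ‖p.1 - p.2‖ₑ ^ (-q) ∂μ.prod μ ≠ ∞ := by
  obtain ⟨M, hM, hle⟩ := exists_lintegral_edist_rpow_le hq hqs hμ
  rw [lintegral_prod _ (by fun_prop)]
  simp only [← edist_eq_enorm_sub]
  refine ne_top_of_le_ne_top ?_ (lintegral_mono hle)
  rw [lintegral_const]
  finiteness

end RieszEnergy

section DensityConvergence
variable {m : ℕ} {μ : Measure ((Fin m → ℝ) × ℝ)}

lemma ae_sub_snd_ne_zero [SFinite μ] (hplane : ∀ b, μ {y | y.2 = b} = 0) :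
    ∀ᵐ p ∂μ.prod μ, (p.1 - p.2).2 ≠ 0 := by
  have hm : MeasurableSet {p : ((Fin m → ℝ) × ℝ) × ((Fin m → ℝ) × ℝ) | (p.1 - p.2).2 ≠ 0} :=
    (isClosed_eq (by fun_prop) continuous_const).measurableSet.compl
  rw [Measure.ae_prod_iff_ae_ae hm]
  refine Eventually.of_forall fun y => ?_
  have hy : ∀ᵐ z ∂μ, z.2 ≠ y.2 := by simpa [ae_iff] using hplane y.2
  filter_upwards [hy] with z hz
  exact sub_ne_zero.2 hz.symm

lemma tendsto_half_pow : Tendsto (fun k : ℕ => (1 / 2 : ℝ) ^ k) atTop (𝓝 0) :=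
  tendsto_pow_atTop_nhds_zero_of_lt_one (by norm_num) (by norm_num)

lemma tendsto_lintegral_corr_projAlong {w : (Fin m → ℝ) × ℝ} (hw : w.2 ≠ 0) :
    Tendsto (fun k : ℕ × ℕ => ∫⁻ u, corr k.1 k.2 (projAlong u w) ∂slopeMeasure m) atTop
      (𝓝 (lineKernel w)) := by
  have hr : Tendsto (fun k : ℕ × ℕ => (1 / 2 : ℝ) ^ k.1 + (1 / 2) ^ k.2) atTop (𝓝 0) := by
    rw [← prod_atTop_atTop_eq, ← add_zero (0 : ℝ)]
    exact (tendsto_half_pow.comp tendsto_fst).add (tendsto_half_pow.comp tendsto_snd)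
  exact tendsto_lintegral_comp_projAlong (ψ := fun k : ℕ × ℕ => corr k.1 k.2)
    (fun k => measurable_corr k.1 k.2) (fun k => lintegral_corr m k.1 k.2)
    (fun k v hv => corr_eq_zero hv) hr hw

lemma tendsto_lintegral_lineDensity_mul [IsFiniteMeasure μ] {s : ℝ} (hs : (m : ℝ) < s)
    (hμ : IsFrostman μ s) (hplane : ∀ b, μ {y | y.2 = b} = 0) :
    ∃ E ≠ ∞, Tendsto (fun k : ℕ × ℕ =>
      ∫⁻ z, lineDensity μ k.1 z * lineDensity μ k.2 z ∂(slopeMeasure m).prod volume)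
      atTop (𝓝 E) := by
  have hdom : ∫⁻ p, 2 * 2 ^ m * transversalityConst m * ‖p.1 - p.2‖ₑ ^ (-(m : ℝ)) ∂μ.prod μ
      ≠ ∞ := by
    rw [lintegral_const_mul _ (by fun_prop)]
    exact ENNReal.mul_ne_top (ENNReal.mul_ne_top (by finiteness) (transversalityConst_ne_top m))
      (lintegral_enorm_sub_rpow_ne_top m.cast_nonneg hs hμ)
  have hle (k : ℕ × ℕ) (p : ((Fin m → ℝ) × ℝ) × ((Fin m → ℝ) × ℝ)) :
      ∫⁻ u, corr k.1 k.2 (projAlong u (p.1 - p.2)) ∂slopeMeasure m ≤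
        2 * 2 ^ m * transversalityConst m * ‖p.1 - p.2‖ₑ ^ (-(m : ℝ)) :=
    lintegral_corr_projAlong_le k.1 k.2 (p.1 - p.2)
  simp_rw [lintegral_lineDensity_mul]
  have hlim : Tendsto (fun k : ℕ × ℕ =>
      ∫⁻ p, ∫⁻ u, corr k.1 k.2 (projAlong u (p.1 - p.2)) ∂slopeMeasure m ∂μ.prod μ)
      atTop (𝓝 (∫⁻ p, lineKernel (p.1 - p.2) ∂μ.prod μ)) := by
    refine tendsto_lintegral_filter_of_dominated_convergence _ (Eventually.of_forall fun k => ?_)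
      (Eventually.of_forall fun k => Eventually.of_forall (hle k)) hdom ?_
    · exact Measurable.lintegral_prod_right
        (f := fun (p : ((Fin m → ℝ) × ℝ) × ((Fin m → ℝ) × ℝ)) u =>
          corr k.1 k.2 (projAlong u (p.1 - p.2))) (by fun_prop)
    · filter_upwards [ae_sub_snd_ne_zero hplane] with p hp
      exact tendsto_lintegral_corr_projAlong hp
  exact ⟨_, ne_top_of_le_ne_top hdom (le_of_tendsto' hlim fun k => lintegral_mono (hle k)), hlim⟩

/-- The absolute difference of the mollified line densities at two scales. -/
noncomputable def densityGap (μ : Measure ((Fin m → ℝ) × ℝ)) (k l : ℕ)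
    (z : (Fin m → ℝ) × (Fin m → ℝ)) : ℝ≥0∞ :=
  (lineDensity μ k z - lineDensity μ l z) + (lineDensity μ l z - lineDensity μ k z)

@[fun_prop]
lemma measurable_densityGap [SFinite μ] (k l : ℕ) : Measurable (densityGap μ k l) := by
  unfold densityGap; fun_prop

lemma lipschitzSnd_densityGap [IsFiniteMeasure μ] (k l : ℕ) : LipschitzSnd (densityGap μ k l) :=
  ((lipschitzSnd_lineDensity μ k).tsub (lipschitzSnd_lineDensity μ l)).add
    ((lipschitzSnd_lineDensity μ l).tsub (lipschitzSnd_lineDensity μ k))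

lemma lineDensity_le_add_densityGap (k l : ℕ) (z : (Fin m → ℝ) × (Fin m → ℝ)) :
    lineDensity μ k z ≤ lineDensity μ l z + densityGap μ k l z :=
  le_add_tsub.trans (add_le_add le_rfl le_self_add)

lemma sq_tsub_add_tsub_add {a b : ℝ≥0∞} (ha : a ≠ ∞) (hb : b ≠ ∞) :
    ((a - b) + (b - a)) ^ 2 + 2 * (a * b) = a * a + b * b := by
  wlog h : a ≤ b generalizing a b
  · rw [add_comm (a - b), mul_comm a b, this hb ha (le_of_not_ge h), add_comm]
  rw [tsub_eq_zero_of_le h, zero_add]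
  obtain ⟨c, rfl⟩ := exists_add_of_le h
  rw [ENNReal.add_sub_cancel_left ha]
  ring

lemma tendsto_add_diag_sub_two_mul {I : ℕ × ℕ → ℝ≥0∞} {E : ℝ≥0∞} (hE : E ≠ ∞)
    (hI : Tendsto I atTop (𝓝 E)) :
    Tendsto (fun k => I (k.1, k.1) + I (k.2, k.2) - 2 * I k) atTop (𝓝 0) := by
  have hdiag : Tendsto (fun k : ℕ => I (k, k)) atTop (𝓝 E) := by
    refine hI.comp ?_
    rw [← prod_atTop_atTop_eq]
    exact tendsto_id.prodMk tendsto_id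
  have hfst : Tendsto (fun k : ℕ × ℕ => I (k.1, k.1)) atTop (𝓝 E) := by
    rw [← prod_atTop_atTop_eq]; exact hdiag.comp tendsto_fst
  have hsnd : Tendsto (fun k : ℕ × ℕ => I (k.2, k.2)) atTop (𝓝 E) := by
    rw [← prod_atTop_atTop_eq]; exact hdiag.comp tendsto_snd
  have hzero : E + E - 2 * E = 0 := by rw [two_mul, tsub_self]
  rw [← hzero]
  exact ENNReal.Tendsto.sub (hfst.add hsnd) (ENNReal.Tendsto.const_mul hI (Or.inr (by simp)))
    (Or.inl (by finiteness))

lemma tendsto_lintegral_densityGap_sq [IsFiniteMeasure μ] {s : ℝ} (hs : (m : ℝ) < s)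
    (hμ : IsFrostman μ s) (hplane : ∀ b, μ {y | y.2 = b} = 0) :
    Tendsto (fun k : ℕ × ℕ => ∫⁻ z, densityGap μ k.1 k.2 z ^ 2 ∂(slopeMeasure m).prod volume)
      atTop (𝓝 0) := by
  obtain ⟨E, hE, hlim⟩ := tendsto_lintegral_lineDensity_mul hs hμ hplane
  set I : ℕ × ℕ → ℝ≥0∞ := fun k =>
    ∫⁻ z, lineDensity μ k.1 z * lineDensity μ k.2 z ∂(slopeMeasure m).prod volume with hI
  have hexpand (k : ℕ × ℕ) : ∫⁻ z, densityGap μ k.1 k.2 z ^ 2 ∂(slopeMeasure m).prod volume +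
      2 * I k = I (k.1, k.1) + I (k.2, k.2) := by
    simp only [hI]
    rw [← lintegral_const_mul _ (by fun_prop), ← lintegral_add_right _ (by fun_prop),
      ← lintegral_add_right _ (by fun_prop)]
    exact lintegral_congr fun z =>
      sq_tsub_add_tsub_add (lineDensity_ne_top μ _ z) (lineDensity_ne_top μ _ z)
  refine (tendsto_add_diag_sub_two_mul hE hlim).congr' ?_
  filter_upwards [hlim.eventually_ne hE] with k hk
  rw [← hexpand k, ENNReal.add_sub_cancel_right (ENNReal.mul_ne_top (by simp) hk)]

lemma exists_subseq_lintegral_densityGap_sq_le [IsFiniteMeasure μ] {s : ℝ} (hs : (m : ℝ) < s)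
    (hμ : IsFrostman μ s) (hplane : ∀ b, μ {y | y.2 = b} = 0) :
    ∃ σ : ℕ → ℕ, StrictMono σ ∧ ∀ i,
      ∫⁻ z, densityGap μ (σ i) (σ (i + 1)) z ^ 2 ∂(slopeMeasure m).prod volume ≤
        (1 / 16) ^ i := by
  obtain ⟨σ, hσ, hgap⟩ := extraction_forall_of_eventually'
    (P := fun i N => ∀ k ≥ N, ∀ l ≥ N,
      ∫⁻ z, densityGap μ k l z ^ 2 ∂(slopeMeasure m).prod volume ≤ (1 / 16) ^ i) fun i => by
    have hpos : 0 < (1 / 16 : ℝ≥0∞) ^ i := pos_iff_ne_zero.2 (pow_ne_zero _ (by simp))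
    obtain ⟨N, hN⟩ := eventually_atTop.1
      ((tendsto_lintegral_densityGap_sq hs hμ hplane).eventually_le_const hpos)
    exact ⟨max N.1 N.2, fun M hM k hk l hl => hN (k, l)
      ⟨(le_max_left _ _).trans (hM.trans hk), (le_max_right _ _).trans (hM.trans hl)⟩⟩
  exact ⟨σ, hσ, fun i => hgap i _ le_rfl _ (hσ.monotone i.le_succ)⟩

end DensityConvergence

section LinesMeetMeasure
variable {m : ℕ} {μ : Measure ((Fin m → ℝ) × ℝ)}

lemma lintegral_lineDensity_projAlong [SFinite μ] (k : ℕ) (x : (Fin m → ℝ) × ℝ) :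
    ∫⁻ u, lineDensity μ k (u, projAlong u x) ∂slopeMeasure m =
      ∫⁻ y, ∫⁻ u, mollifier k (projAlong u (y - x)) ∂slopeMeasure m ∂μ := by
  unfold lineDensity
  rw [lintegral_lintegral_swap (by fun_prop)]
  simp only [projAlong_sub]

lemma lineKernel_pos {w : (Fin m → ℝ) × ℝ} (hw : w.2 ≠ 0) : 0 < lineKernel w :=
  ENNReal.mul_pos (ENNReal.ofReal_pos.2 (by positivity)).ne' (by simpa using slopeDensity_pos _)

@[fun_prop]
lemma measurable_lineKernel : Measurable (lineKernel (m := m)) := by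
  have := (continuous_slopeDensity (m := m)).measurable
  unfold lineKernel lineSlope
  fun_prop

lemma lintegral_lineKernel_pos (hplane : ∀ b, μ {y | y.2 = b} = 0) (hμ : μ ≠ 0)
    (x : (Fin m → ℝ) × ℝ) : 0 < ∫⁻ y, lineKernel (y - x) ∂μ := by
  have hx : ∀ᵐ y ∂μ, y.2 ≠ x.2 := by simpa [ae_iff] using hplane x.2
  rw [pos_iff_ne_zero, Ne, lintegral_eq_zero_iff (by fun_prop)]
  refine fun h => hμ (ae_eq_bot.1 (eventually_false_iff_eq_bot.1 ?_))
  filter_upwards [h, hx] with y hy hyx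
  exact (lineKernel_pos (w := y - x) (sub_ne_zero.2 hyx)).ne' hy

lemma lintegral_lineKernel_le_liminf [SFinite μ] (hplane : ∀ b, μ {y | y.2 = b} = 0) {σ : ℕ → ℕ}
    (hσ : StrictMono σ) (x : (Fin m → ℝ) × ℝ) :
    ∫⁻ y, lineKernel (y - x) ∂μ ≤
      liminf (fun n => ∫⁻ u, lineDensity μ (σ n) (u, projAlong u x) ∂slopeMeasure m) atTop := by
  have hx : ∀ᵐ y ∂μ, y.2 ≠ x.2 := by simpa [ae_iff] using hplane x.2
  simp_rw [lintegral_lineDensity_projAlong]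
  refine (lintegral_mono_ae ?_).trans (lintegral_liminf_le fun n => ?_)
  · filter_upwards [hx] with y hy
    refine (Tendsto.liminf_eq ?_).ge
    exact tendsto_lintegral_comp_projAlong (fun n => measurable_mollifier (σ n))
      (fun n => lintegral_mollifier m (σ n)) (fun n v hv => mollifier_eq_zero hv)
      (tendsto_half_pow.comp hσ.tendsto_atTop) (sub_ne_zero.2 hy)
  · exact Measurable.lintegral_prod_right (f := fun (y : (Fin m → ℝ) × ℝ) u =>
      mollifier (σ n) (projAlong u (y - x))) (by fun_prop)

lemma le_tsum_of_le_add_of_liminf_eq_zero {a h : ℕ → ℝ≥0∞} (ha : ∀ n, a n ≤ a (n + 1) + h n)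
    (hlim : liminf a atTop = 0) (n : ℕ) : a n ≤ ∑' i, h (n + i) := by
  have hstep (j : ℕ) : a n ≤ a (n + j) + ∑ i ∈ Finset.range j, h (n + i) := by
    induction j with
    | zero => simp
    | succ j ih =>
      calc a n ≤ a (n + j) + ∑ i ∈ Finset.range j, h (n + i) := ih
        _ ≤ a (n + j + 1) + h (n + j) + ∑ i ∈ Finset.range j, h (n + i) := by gcongr; exact ha _
        _ = a (n + (j + 1)) + ∑ i ∈ Finset.range (j + 1), h (n + i) := by
            rw [Finset.sum_range_succ, ← add_assoc n]; ring
  have hle : a n - ∑' i, h (n + i) ≤ liminf a atTop := by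
    refine le_liminf_of_le (by isBoundedDefault) ?_
    filter_upwards [eventually_ge_atTop n] with k hk
    obtain ⟨j, rfl⟩ := Nat.exists_eq_add_of_le hk
    rw [tsub_le_iff_right]
    exact (hstep j).trans (by gcongr; exact ENNReal.sum_le_tsum _)
  rw [hlim] at hle
  exact tsub_eq_zero_iff_le.1 (nonpos_iff_eq_zero.1 hle)

lemma not_ae_liminf_lineDensity_eq_zero [IsFiniteMeasure μ] (hμ₀ : μ ≠ 0)
    (hplane : ∀ b, μ {y | y.2 = b} = 0) {σ : ℕ → ℕ} (hσ : StrictMono σ) {x : (Fin m → ℝ) × ℝ}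
    (hx : ∀ᶠ i in atTop,
      ∫⁻ u, densityGap μ (σ i) (σ (i + 1)) (u, projAlong u x) ∂slopeMeasure m ≤ 2 * (1 / 2) ^ i) :
    ¬ ∀ᵐ u ∂slopeMeasure m,
      liminf (fun k => lineDensity μ (σ k) (u, projAlong u x)) atTop = 0 := by
  intro hae
  obtain ⟨N, hN⟩ := eventually_atTop.1 hx
  have hbound (n : ℕ) (hn : N ≤ n) :
      ∫⁻ u, lineDensity μ (σ n) (u, projAlong u x) ∂slopeMeasure m ≤ 4 * (1 / 2) ^ n := by
    calc ∫⁻ u, lineDensity μ (σ n) (u, projAlong u x) ∂slopeMeasure m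
        ≤ ∫⁻ u, ∑' i, densityGap μ (σ (n + i)) (σ (n + i + 1)) (u, projAlong u x)
            ∂slopeMeasure m := by
          refine lintegral_mono_ae ?_
          filter_upwards [hae] with u hu
          exact le_tsum_of_le_add_of_liminf_eq_zero (fun i => lineDensity_le_add_densityGap _ _ _)
            hu n
      _ = ∑' i, ∫⁻ u, densityGap μ (σ (n + i)) (σ (n + i + 1)) (u, projAlong u x)
            ∂slopeMeasure m :=
          lintegral_tsum fun i => ((measurable_densityGap _ _).comp (by fun_prop)).aemeasurable
      _ ≤ ∑' i, 2 * (1 / 2) ^ (n + i) :=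
          ENNReal.tsum_le_tsum fun i => hN _ (hn.trans (Nat.le_add_right n i))
      _ = 4 * (1 / 2) ^ n := by
          simp only [one_div, pow_add, ENNReal.tsum_mul_left, ENNReal.tsum_geometric_two]
          ring
  have hzero : Tendsto (fun n => ∫⁻ u, lineDensity μ (σ n) (u, projAlong u x) ∂slopeMeasure m)
      atTop (𝓝 0) :=
    tendsto_of_tendsto_of_tendsto_of_le_of_le' tendsto_const_nhds
      (tendsto_const_mul_half_pow (C := 4) (by simp)) (Eventually.of_forall fun _ => zero_le)
      (eventually_atTop.2 ⟨N, hbound⟩)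
  have hpos := (lintegral_lineKernel_pos hplane hμ₀ x).trans_le
    (lintegral_lineKernel_le_liminf hplane hσ x)
  exact hpos.ne' hzero.liminf_eq

lemma exists_subseq_not_ae_liminf_lineDensity_eq_zero [IsFiniteMeasure μ] {s : ℝ}
    (hs : (m : ℝ) < s) (hμ₀ : μ ≠ 0) (hμ : IsFrostman μ s) (hplane : ∀ b, μ {y | y.2 = b} = 0) :
    ∃ σ : ℕ → ℕ, StrictMono σ ∧ ∃ B : Set ((Fin m → ℝ) × ℝ), (∀ t : ℝ, (m : ℝ) < t → μH[t] B = 0) ∧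
      ∀ x ∉ B, ¬ ∀ᵐ u ∂slopeMeasure m,
        liminf (fun k => lineDensity μ (σ k) (u, projAlong u x)) atTop = 0 := by
  obtain ⟨σ, hσ, hgap⟩ := exists_subseq_lintegral_densityGap_sq_le hs hμ hplane
  refine ⟨σ, hσ, {x | ¬ ∀ᶠ i in cofinite,
    ∫⁻ u, densityGap μ (σ i) (σ (i + 1)) (u, projAlong u x) ∂slopeMeasure m ≤ 2 * (1 / 2) ^ i},
    fun t ht => ?_, fun x hx => ?_⟩
  · exact hausdorffMeasure_not_eventually_le_eq_zero ht (fun i => measurable_densityGap _ _)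
      (fun i => lipschitzSnd_densityGap _ _) (fun i => by simp) (fun i => by finiteness)
      (ne_top_of_le_ne_top tsum_one_div_four_pow_ne_top
        (ENNReal.tsum_le_tsum fun i => div_half_pow_sq_le (hgap i)))
  · rw [mem_ofPred_eq, not_not, Nat.cofinite_eq_atTop] at hx
    exact not_ae_liminf_lineDensity_eq_zero hμ₀ hplane hσ hx

end LinesMeetMeasure

section LineEnergy
variable {m : ℕ} {μ : Measure ((Fin m → ℝ) × ℝ)}

/-- The `τ`-energy of `μ` along the line `{y | projAlong z.1 y = z.2}`, mollified at scale
`2 ^ (-k)` across the line. -/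
noncomputable def lineEnergy (μ : Measure ((Fin m → ℝ) × ℝ)) (τ : ℝ) (k : ℕ)
    (z : (Fin m → ℝ) × (Fin m → ℝ)) : ℝ≥0∞ :=
  ∫⁻ p, mollifier k (projAlong z.1 p.1 - z.2) * mollifier k (projAlong z.1 p.2 - z.2) *
    ‖p.1 - p.2‖ₑ ^ (-τ) ∂μ.prod μ

lemma measurable_lineEnergy [SFinite μ] (τ : ℝ) (k : ℕ) : Measurable (lineEnergy μ τ k) :=
  Measurable.lintegral_prod_right (f := fun (z : (Fin m → ℝ) × (Fin m → ℝ))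
    (p : ((Fin m → ℝ) × ℝ) × ((Fin m → ℝ) × ℝ)) =>
      mollifier k (projAlong z.1 p.1 - z.2) * mollifier k (projAlong z.1 p.2 - z.2) *
        ‖p.1 - p.2‖ₑ ^ (-τ)) (by fun_prop)

lemma rpow_neg_mul_rpow_neg_le {a : ℝ≥0∞} (ha : a ≠ ∞) {p q : ℝ} (hpq : 0 < p + q) :
    a ^ (-p) * a ^ (-q) ≤ a ^ (-(p + q)) := by
  rcases eq_or_ne a 0 with rfl | h0
  · rw [ENNReal.zero_rpow_of_neg (neg_neg_of_pos hpq)]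
    exact le_top
  · rw [← ENNReal.rpow_add _ _ h0 ha, neg_add]

lemma lintegral_lineEnergy_le [SFinite μ] {τ : ℝ} (hτ : 0 < τ) (k : ℕ) :
    ∫⁻ z, lineEnergy μ τ k z ∂(slopeMeasure m).prod volume ≤
      2 * 2 ^ m * transversalityConst m * ∫⁻ p, ‖p.1 - p.2‖ₑ ^ (-(m + τ)) ∂μ.prod μ := by
  unfold lineEnergy
  rw [lintegral_mollifier_mul_mollifier_mul μ k k (G := fun p => ‖p.1 - p.2‖ₑ ^ (-τ))
    (by fun_prop), ← lintegral_const_mul _ (by fun_prop)]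
  refine lintegral_mono fun p => ?_
  calc (∫⁻ u, corr k k (projAlong u (p.1 - p.2)) ∂slopeMeasure m) * ‖p.1 - p.2‖ₑ ^ (-τ)
      ≤ 2 * 2 ^ m * transversalityConst m * ‖p.1 - p.2‖ₑ ^ (-(m : ℝ)) *
          ‖p.1 - p.2‖ₑ ^ (-τ) := by
        gcongr; exact lintegral_corr_projAlong_le _ _ _
    _ ≤ 2 * 2 ^ m * transversalityConst m * ‖p.1 - p.2‖ₑ ^ (-(m + τ)) := by
        rw [mul_assoc]
        gcongr
        exact rpow_neg_mul_rpow_neg_le enorm_ne_top (by positivity)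

lemma exists_ae_liminf_lineEnergy_ne_top [IsFiniteMeasure μ] {s τ : ℝ} (hτ : 0 < τ)
    (hs : m + τ < s) (hμ : IsFrostman μ s) (σ : ℕ → ℕ) :
    ∃ B : Set ((Fin m → ℝ) × ℝ), (∀ t : ℝ, (m : ℝ) < t → μH[t] B = 0) ∧
      ∀ x ∉ B, ∀ᵐ u ∂slopeMeasure m,
        liminf (fun k => lineEnergy μ τ (σ k) (u, projAlong u x)) atTop ≠ ∞ := by
  set N := {z | liminf (fun k => lineEnergy μ τ (σ k) z) atTop = ∞}
  have hbound : ∫⁻ z, liminf (fun k => lineEnergy μ τ (σ k) z) atTop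
      ∂(slopeMeasure m).prod volume ≠ ∞ := by
    refine ne_top_of_le_ne_top ?_
      ((lintegral_liminf_le fun k => measurable_lineEnergy τ (σ k)).trans
        (liminf_le_of_frequently_le'
          (Frequently.of_forall fun k => lintegral_lineEnergy_le hτ (σ k))))
    exact ENNReal.mul_ne_top (ENNReal.mul_ne_top (by finiteness) (transversalityConst_ne_top m))
      (lintegral_enorm_sub_rpow_ne_top (by positivity) hs hμ)
  have hN : (slopeMeasure m).prod volume N = 0 := by
    simpa [ae_iff] using
      ae_lt_top (Measurable.liminf fun k => measurable_lineEnergy τ (σ k)) hbound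
  refine ⟨{x | ¬ ∀ᵐ u ∂slopeMeasure m, (u, projAlong u x) ∉ N},
    fun t ht => hausdorffMeasure_not_ae_notMem_eq_zero ht hN, fun x hx => ?_⟩
  exact not_not.1 hx

end LineEnergy

section SectionLowerBound

lemma hausdorffContent_le_hausdorffMeasure {X : Type*} [EMetricSpace X] [MeasurableSpace X]
    [BorelSpace X] (t : ℝ) (S : Set X) : hausdorffContent X t S ≤ μH[t] S := by
  rw [hausdorffContent, OuterMeasure.boundedBy_apply, Measure.hausdorffMeasure_apply]
  exact le_iSup₂_of_le ∞ (by simp) (iInf₂_mono fun T _ => le_iInf fun _ => le_rfl)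

lemma exists_isOpen_superset_ediam_rpow_le {X : Type*} [PseudoEMetricSpace X] {t : ℝ} (ht : 0 < t)
    {T : Set X} {w : ℝ≥0∞} (hTw : ediam T ^ t < w) :
    ∃ U, T ⊆ U ∧ IsOpen U ∧ ediam U ^ t ≤ w := by
  obtain ⟨δ, hδ, hTδ⟩ := ENNReal.lt_iff_exists_add_pos_lt.1 ((ENNReal.lt_rpow_inv_iff ht).2 hTw)
  refine ⟨thickening (δ / 2 : ℝ≥0) T, self_subset_thickening (by positivity) T, isOpen_thickening,
    (ENNReal.le_rpow_inv_iff ht).1 ?_⟩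
  calc ediam (thickening (δ / 2 : ℝ≥0) T) ≤ ediam T + 2 * (δ / 2 : ℝ≥0) := ediam_thickening_le _
    _ = ediam T + δ := by
        congr 1
        rw [← ENNReal.coe_ofNat, ← ENNReal.coe_mul, mul_div_cancel₀ _ two_ne_zero]
    _ ≤ w ^ t⁻¹ := hTδ.le

lemma exists_isOpen_cover_of_hausdorffMeasure_eq_zero {X : Type*} [EMetricSpace X]
    [MeasurableSpace X] [BorelSpace X] {t : ℝ} (ht : 0 < t) {S : Set X} (hS : μH[t] S = 0)
    {η : ℝ≥0∞} (hη : η ≠ 0) :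
    ∃ (U : ℕ → Set X) (w : ℕ → ℝ≥0∞), S ⊆ ⋃ i, U i ∧ (∀ i, IsOpen (U i)) ∧
      (∀ i, ediam (U i) ^ t ≤ w i) ∧ (∀ i, w i ≠ 0) ∧ (∀ i, w i ≠ ∞) ∧ ∑' i, w i ≤ η := by
  obtain ⟨ε, hε, hεη⟩ := ENNReal.exists_pos_sum_of_countable (ENNReal.half_pos hη).ne' ℕ
  obtain ⟨T, hST, hT⟩ := exists_tsum_ediam_rpow_lt ht
    ((hausdorffContent_le_hausdorffMeasure t S).trans_lt (hS.trans_lt (ENNReal.half_pos hη)))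
  have hTtop (i : ℕ) : ediam (T i) ^ t ≠ ∞ := ((ENNReal.le_tsum i).trans_lt hT).ne_top
  have hlt (i : ℕ) : ediam (T i) ^ t < ediam (T i) ^ t + ε i :=
    ENNReal.lt_add_right (hTtop i) (by simpa using (hε i).ne')
  choose U hTU hUo hU using fun i => exists_isOpen_superset_ediam_rpow_le ht (hlt i)
  refine ⟨U, fun i => ediam (T i) ^ t + ε i, hST.trans (iUnion_mono hTU), hUo, hU,
    fun i => (hlt i).ne_bot, fun i => ENNReal.add_ne_top.2 ⟨hTtop i, by simp⟩, ?_⟩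
  calc ∑' i, (ediam (T i) ^ t + ε i) = ∑' i, ediam (T i) ^ t + ∑' i, (ε i : ℝ≥0∞) :=
        ENNReal.tsum_add
    _ ≤ η / 2 + η / 2 := add_le_add hT.le hεη.le
    _ = η := ENNReal.add_halves η

section Energy
variable {α : Type*} [MeasurableSpace α] {μ : Measure α} [SFinite μ] {f : α → ℝ≥0∞}
  {G : α × α → ℝ≥0∞} {M : ℝ≥0∞}

lemma setLIntegral_le_mul_add_energy_div (hf : Measurable f) (hG : Measurable G) {D : Set α}
    {w : ℝ≥0∞} (hw0 : w ≠ 0) (hwt : w ≠ ∞) (hw : ∀ p ∈ D ×ˢ D, 1 ≤ w * G p) (hM0 : M ≠ 0)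
    (hMt : M ≠ ∞) :
    ∫⁻ y in D, f y ∂μ ≤ M * w + (∫⁻ p in D ×ˢ D, f p.1 * f p.2 * G p ∂μ.prod μ) / M := by
  set a := ∫⁻ y in D, f y ∂μ with ha
  set E := ∫⁻ p in D ×ˢ D, f p.1 * f p.2 * G p ∂μ.prod μ
  have hsq : a * a ≤ w * E := by
    rw [ha, ← lintegral_prod_mul hf.aemeasurable hf.aemeasurable, Measure.prod_restrict,
      ← lintegral_const_mul _ (by fun_prop)]
    refine setLIntegral_mono (by fun_prop) fun p hp => ?_
    calc f p.1 * f p.2 = f p.1 * f p.2 * 1 := (mul_one _).symm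
      _ ≤ f p.1 * f p.2 * (w * G p) := by gcongr; exact hw p hp
      _ = w * (f p.1 * f p.2 * G p) := by ring
  rcases le_total a (M * w) with h | h
  · exact h.trans le_self_add
  · refine le_add_left ?_
    calc a ≤ a * a / (M * w) := by
          rw [ENNReal.le_div_iff_mul_le (Or.inl (mul_ne_zero hM0 hw0))
            (Or.inl (ENNReal.mul_ne_top hMt hwt))]
          gcongr
      _ ≤ w * E / (M * w) := by gcongr
      _ = E / M := by rw [mul_comm M, ENNReal.mul_div_mul_left _ _ hw0 hwt]

lemma setLIntegral_iUnion_le_mul_tsum_add_energy_div (hf : Measurable f) (hG : Measurable G)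
    {D : ℕ → Set α} (hD : ∀ i, MeasurableSet (D i)) (hdisj : Pairwise (Function.onFun Disjoint D))
    {w : ℕ → ℝ≥0∞} (hw0 : ∀ i, w i ≠ 0) (hwt : ∀ i, w i ≠ ∞)
    (hw : ∀ i, ∀ p ∈ D i ×ˢ D i, 1 ≤ w i * G p) (hM0 : M ≠ 0) (hMt : M ≠ ∞) :
    ∫⁻ y in ⋃ i, D i, f y ∂μ ≤
      M * ∑' i, w i + (∫⁻ p, f p.1 * f p.2 * G p ∂μ.prod μ) / M := by
  have henergy : ∑' i, ∫⁻ p in D i ×ˢ D i, f p.1 * f p.2 * G p ∂μ.prod μ ≤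
      ∫⁻ p, f p.1 * f p.2 * G p ∂μ.prod μ := by
    rw [← lintegral_iUnion (fun i => (hD i).prod (hD i))
      fun i j hij => Disjoint.set_prod_left (hdisj hij) _ _]
    exact setLIntegral_le_lintegral _ _
  calc ∫⁻ y in ⋃ i, D i, f y ∂μ = ∑' i, ∫⁻ y in D i, f y ∂μ := lintegral_iUnion hD hdisj _
    _ ≤ ∑' i, (M * w i + (∫⁻ p in D i ×ˢ D i, f p.1 * f p.2 * G p ∂μ.prod μ) / M) :=
        ENNReal.tsum_le_tsum fun i =>
          setLIntegral_le_mul_add_energy_div hf hG (hw0 i) (hwt i) (hw i) hM0 hMt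
    _ = M * ∑' i, w i + (∑' i, ∫⁻ p in D i ×ˢ D i, f p.1 * f p.2 * G p ∂μ.prod μ) / M := by
        simp only [ENNReal.tsum_add, ENNReal.tsum_mul_left, div_eq_mul_inv, ENNReal.tsum_mul_right]
    _ ≤ M * ∑' i, w i + (∫⁻ p, f p.1 * f p.2 * G p ∂μ.prod μ) / M := by gcongr

end Energy

variable {m : ℕ} {μ : Measure ((Fin m → ℝ) × ℝ)}

lemma eventually_mollifier_projAlong_sub_eq_zero {K : Set ((Fin m → ℝ) × ℝ)} (hK : IsCompact K)
    {u v : Fin m → ℝ} (hv : ∀ y ∈ K, projAlong u y ≠ v) :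
    ∀ᶠ k in atTop, ∀ y ∈ K, mollifier k (projAlong u y - v) = 0 := by
  rcases K.eq_empty_or_nonempty with rfl | hne
  · simp
  obtain ⟨y₀, hy₀, hmin⟩ := hK.exists_isMinOn hne (f := fun y => ‖projAlong u y - v‖) (by fun_prop)
  have hpos : 0 < ‖projAlong u y₀ - v‖ := norm_pos_iff.2 (sub_ne_zero.2 (hv y₀ hy₀))
  filter_upwards [tendsto_half_pow.eventually_lt_const hpos] with k hk y hy
  exact mollifier_eq_zero (hk.trans_le (hmin hy))

lemma one_le_mul_enorm_sub_rpow_neg {E : Type*} [SeminormedAddCommGroup E] {U : Set E} {p q : E}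
    (hp : p ∈ U) (hq : q ∈ U) {τ : ℝ} (hτ : 0 ≤ τ) {w : ℝ≥0∞} (hU : ediam U ^ τ ≤ w) (hw0 : w ≠ 0)
    (hwt : w ≠ ∞) : 1 ≤ w * ‖p - q‖ₑ ^ (-τ) := by
  rw [ENNReal.rpow_neg, ← div_eq_mul_inv, ENNReal.le_div_iff_mul_le (Or.inr hw0) (Or.inr hwt),
    one_mul, ← edist_eq_enorm_sub]
  exact (ENNReal.rpow_le_rpow (edist_le_ediam_of_mem hp hq) hτ).trans hU

lemma lineDensity_le_mul_tsum_add_lineEnergy_div [SFinite μ] {τ : ℝ} (hτ : 0 ≤ τ)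
    {U : ℕ → Set ((Fin m → ℝ) × ℝ)} (hU : ∀ i, IsOpen (U i)) {w : ℕ → ℝ≥0∞}
    (hUw : ∀ i, ediam (U i) ^ τ ≤ w i) (hw0 : ∀ i, w i ≠ 0) (hwt : ∀ i, w i ≠ ∞)
    {u v : Fin m → ℝ} {k : ℕ}
    (hsupp : ∀ᵐ y ∂μ, y ∉ ⋃ i, U i → mollifier k (projAlong u y - v) = 0) {M : ℝ≥0∞}
    (hM0 : M ≠ 0) (hMt : M ≠ ∞) :
    lineDensity μ k (u, v) ≤ M * ∑' i, w i + lineEnergy μ τ k (u, v) / M := by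
  have hUm : MeasurableSet (⋃ i, U i) := (isOpen_iUnion hU).measurableSet
  have hDU (i : ℕ) : disjointed U i ⊆ U i := disjointed_subset U i
  calc lineDensity μ k (u, v) = ∫⁻ y in ⋃ i, U i, mollifier k (projAlong u y - v) ∂μ := by
        rw [lineDensity, ← lintegral_indicator hUm]
        refine lintegral_congr_ae ?_
        filter_upwards [hsupp] with y hy
        by_cases hyU : y ∈ ⋃ i, U i
        · rw [indicator_of_mem hyU]
        · rw [indicator_of_notMem hyU, hy hyU]
    _ = ∫⁻ y in ⋃ i, disjointed U i, mollifier k (projAlong u y - v) ∂μ := by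
        rw [iUnion_disjointed]
    _ ≤ M * ∑' i, w i + lineEnergy μ τ k (u, v) / M :=
        setLIntegral_iUnion_le_mul_tsum_add_energy_div
          (f := fun y => mollifier k (projAlong u y - v)) (G := fun p => ‖p.1 - p.2‖ₑ ^ (-τ))
          (by fun_prop) (by fun_prop)
          (fun i => MeasurableSet.disjointed (fun i => (hU i).measurableSet) i)
          (disjoint_disjointed U) hw0 hwt
          (fun i p hp => one_le_mul_enorm_sub_rpow_neg (hDU i hp.1) (hDU i hp.2) hτ (hUw i)
            (hw0 i) (hwt i)) hM0 hMt

lemma ofReal_le_dimH_section [IsFiniteMeasure μ] {τ : ℝ} (hτ : 0 < τ)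
    {K : Set ((Fin m → ℝ) × ℝ)} (hK : IsCompact K) (hμK : ∀ᵐ y ∂μ, y ∈ K) {σ : ℕ → ℕ}
    (hσ : StrictMono σ) {u v : Fin m → ℝ}
    (hdensity : liminf (fun k => lineDensity μ (σ k) (u, v)) atTop ≠ 0)
    (henergy : liminf (fun k => lineEnergy μ τ (σ k) (u, v)) atTop ≠ ∞) :
    ENNReal.ofReal τ ≤ dimH (K ∩ {y | projAlong u y = v}) := by
  by_contra! hdim
  have hnull : μH[τ] (K ∩ {y | projAlong u y = v}) = 0 := by
    simpa only [Real.coe_toNNReal _ hτ.le] using hausdorffMeasure_of_dimH_lt (d := τ.toNNReal) hdim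
  obtain ⟨g, hg0, hg⟩ := exists_between (pos_iff_ne_zero.2 hdensity)
  obtain ⟨J, hJ, hJt⟩ := exists_between (lt_top_iff_ne_top.2 henergy)
  have hle (n : ℕ) (hn : n ≠ 0) : g ≤ (1 + J) / n := by
    have hn0 : (n : ℝ≥0∞) ≠ 0 := mod_cast hn
    obtain ⟨U, w, hcover, hUo, hUw, hw0, hwt, hw⟩ :=
      exists_isOpen_cover_of_hausdorffMeasure_eq_zero hτ hnull
        (η := (n : ℝ≥0∞)⁻¹ * (n : ℝ≥0∞)⁻¹) (by simp)
    have hfar : ∀ᶠ k in atTop, ∀ y ∈ K \ ⋃ i, U i, mollifier (σ k) (projAlong u y - v) = 0 :=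
      hσ.tendsto_atTop.eventually (eventually_mollifier_projAlong_sub_eq_zero
        (hK.diff (isOpen_iUnion hUo)) fun y hy hyv => hy.2 (hcover ⟨hy.1, hyv⟩))
    obtain ⟨k, hkJ, hkg, hkU⟩ := ((frequently_lt_of_liminf_lt (by isBoundedDefault)
      hJ).and_eventually ((eventually_lt_of_lt_liminf hg).and hfar)).exists
    calc g ≤ lineDensity μ (σ k) (u, v) := hkg.le
      _ ≤ n * ∑' i, w i + lineEnergy μ τ (σ k) (u, v) / n :=
          lineDensity_le_mul_tsum_add_lineEnergy_div hτ.le hUo hUw hw0 hwt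
            (hμK.mono fun y hy hyU => hkU y ⟨hy, hyU⟩) hn0 (by simp)
      _ ≤ n * ((n : ℝ≥0∞)⁻¹ * (n : ℝ≥0∞)⁻¹) + J / n := by gcongr
      _ = (1 + J) / n := by
          rw [← mul_assoc, ENNReal.mul_inv_cancel hn0 (by simp), ← div_eq_mul_inv,
            ENNReal.div_add_div_same]
  have hlim : Tendsto (fun n : ℕ => (1 + J) / n) atTop (𝓝 0) := by
    simpa using ENNReal.Tendsto.const_div ENNReal.tendsto_nat_nhds_top
      (Or.inr (ENNReal.add_ne_top.2 ⟨ENNReal.one_ne_top, hJt.ne⟩))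
  exact hg0.not_ge (ge_of_tendsto hlim ((eventually_ne_atTop 0).mono hle))

end SectionLowerBound

section Fibres
variable {m : ℕ}

lemma volume_closure_image_le {X : Type*} [PseudoEMetricSpace X] {f : X → Fin m → ℝ} {T : Set X}
    {L : ℝ≥0} (hf : LipschitzOnWith L f T) : volume (closure (f '' T)) ≤ (L * ediam T) ^ m := by
  refine (Real.volume_pi_le_diam_pow _).trans ?_
  rw [Fintype.card_fin, ediam_closure]
  gcongr
  exact ediam_image_le_iff.2 fun y hy z hz => (hf hy hz).trans (by
    gcongr; exact edist_le_ediam_of_mem hy hz)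

lemma exists_measurable_hausdorffContent_fiber_le {X : Type*} [PseudoEMetricSpace X] {t : ℝ}
    (ht : 0 < t) {S : Set X} {f : X → Fin m → ℝ} {L : ℝ≥0} (hf : LipschitzOnWith L f S)
    {η : ℝ≥0∞} (hS : hausdorffContent X (m + t) S < η) :
    ∃ h : (Fin m → ℝ) → ℝ≥0∞, Measurable h ∧
      (∀ u, hausdorffContent X t (S ∩ {y | f y = u}) ≤ h u) ∧ ∫⁻ u, h u ≤ L ^ m * η := by
  obtain ⟨T, hST, hT⟩ := exists_tsum_ediam_rpow_lt (by positivity) hS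
  set F : ℕ → Set (Fin m → ℝ) := fun i => closure (f '' (T i ∩ S))
  have hF (i : ℕ) : MeasurableSet (F i) := isClosed_closure.measurableSet
  have hvol (i : ℕ) : volume (F i) ≤ (L * ediam (T i)) ^ m :=
    (volume_closure_image_le (hf.mono inter_subset_right)).trans (by
      gcongr; exact inter_subset_left)
  refine ⟨fun u => ∑' i, (F i).indicator (fun _ => ediam (T i) ^ t) u,
    Measurable.tsum fun i => measurable_const.indicator (hF i), fun u => ?_, ?_⟩
  · have hcover : S ∩ {y | f y = u} ⊆ ⋃ i, T i ∩ (S ∩ {y | f y = u}) := by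
      rw [← iUnion_inter]
      exact subset_inter (inter_subset_left.trans hST) Subset.rfl
    refine (measure_mono hcover).trans ((measure_iUnion_le _).trans ?_)
    refine ENNReal.tsum_le_tsum fun i => ?_
    rcases (T i ∩ (S ∩ {y | f y = u})).eq_empty_or_nonempty with hempty | ⟨y, hyT, hyS, hyu⟩
    · simp [hempty]
    · have hu : u ∈ F i := subset_closure ⟨y, ⟨hyT, hyS⟩, hyu⟩
      rw [indicator_of_mem hu]
      refine (OuterMeasure.boundedBy_le _).trans ?_
      gcongr
      exact inter_subset_left
  · rw [lintegral_tsum fun i => (measurable_const.indicator (hF i)).aemeasurable]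
    calc ∑' i, ∫⁻ u, (F i).indicator (fun _ => ediam (T i) ^ t) u
        ≤ ∑' i, (L : ℝ≥0∞) ^ m * ediam (T i) ^ (m + t) := by
          refine ENNReal.tsum_le_tsum fun i => ?_
          rw [lintegral_indicator_const (hF i),
            ENNReal.rpow_add_of_nonneg _ _ m.cast_nonneg ht.le, ENNReal.rpow_natCast, ← mul_assoc,
            ← mul_pow, mul_comm]
          gcongr
          exact hvol i
      _ ≤ L ^ m * η := by rw [ENNReal.tsum_mul_left]; gcongr

lemma ae_hausdorffMeasure_fiber_eq_zero {X : Type*} [EMetricSpace X] [MeasurableSpace X]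
    [BorelSpace X] {t : ℝ} (ht : 0 < t) {S : Set X} (hS : μH[m + t] S = 0) {f : X → Fin m → ℝ}
    {L : ℝ≥0} (hf : LipschitzOnWith L f S) :
    ∀ᵐ u : Fin m → ℝ, μH[t] (S ∩ {y | f y = u}) = 0 := by
  have hcontent : hausdorffContent X (m + t) S = 0 :=
    nonpos_iff_eq_zero.1 ((hausdorffContent_le_hausdorffMeasure _ S).trans_eq hS)
  have hbound (k : ℕ) := exists_measurable_hausdorffContent_fiber_le ht hf
    (η := (k : ℝ≥0∞)⁻¹) (by rw [hcontent]; simp)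
  choose h hmeas hle hint using hbound
  have hzero : ∫⁻ u, ⨅ k, h k u = 0 := by
    have hlim : Tendsto (fun k : ℕ => (L : ℝ≥0∞) ^ m * (k : ℝ≥0∞)⁻¹) atTop (𝓝 0) := by
      simpa using ENNReal.Tendsto.const_mul ENNReal.tendsto_inv_nat_nhds_zero
        (Or.inr (by finiteness : (L : ℝ≥0∞) ^ m ≠ ∞))
    exact nonpos_iff_eq_zero.1 (ge_of_tendsto' hlim fun k =>
      (lintegral_mono fun u => iInf_le _ k).trans (hint k))
  filter_upwards [(lintegral_eq_zero_iff (Measurable.iInf hmeas)).1 hzero] with u hu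
  exact hausdorffMeasure_eq_zero_of_hausdorffContent_eq_zero ht
    (nonpos_iff_eq_zero.1 ((le_iInf fun k => hle k u).trans_eq hu))

lemma exists_countable_cover_lipschitzOnWith {X Y : Type*} [PseudoEMetricSpace X]
    [SecondCountableTopology X] [PseudoEMetricSpace Y] {f : X → Y} {S : Set X}
    (hf : LocallyLipschitzOn S f) :
    ∃ 𝒱 : Set (Set X), 𝒱.Countable ∧ S = ⋃₀ 𝒱 ∧ ∀ V ∈ 𝒱, ∃ L, LipschitzOnWith L f V := by
  choose! L V hV hL using fun x (hx : x ∈ S) => hf hx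
  obtain ⟨T, hTS, hT, hcover⟩ := countable_cover_nhdsWithin (s := S) (f := V) hV
  refine ⟨(fun x => S ∩ V x) '' T, hT.image _, ?_, ?_⟩
  · rw [sUnion_image, ← inter_iUnion₂, inter_eq_left.2 hcover]
  · rintro _ ⟨x, hx, rfl⟩
    exact ⟨L x, (hL x (hTS hx)).mono inter_subset_right⟩

lemma ae_hausdorffMeasure_fiber_eq_zero_of_locallyLipschitzOn {X : Type*} [EMetricSpace X]
    [SecondCountableTopology X] [MeasurableSpace X] [BorelSpace X] {t : ℝ} (ht : 0 < t) {S : Set X}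
    (hS : μH[m + t] S = 0) {f : X → Fin m → ℝ} (hf : LocallyLipschitzOn S f) :
    ∀ᵐ u : Fin m → ℝ, μH[t] (S ∩ {y | f y = u}) = 0 := by
  obtain ⟨𝒱, h𝒱, rfl, hL⟩ := exists_countable_cover_lipschitzOnWith hf
  have hpiece : ∀ᵐ u : Fin m → ℝ, ∀ V ∈ 𝒱, μH[t] (V ∩ {y | f y = u}) = 0 := by
    rw [ae_ball_iff h𝒱]
    intro V hV
    obtain ⟨L, hL⟩ := hL V hV
    exact ae_hausdorffMeasure_fiber_eq_zero ht (measure_mono_null (subset_sUnion_of_mem hV) hS) hL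
  filter_upwards [hpiece] with u hu
  rw [sUnion_eq_biUnion, iUnion₂_inter]
  exact (measure_biUnion_null_iff h𝒱).2 hu

lemma hausdorffMeasure_image_eq_zero {X Y : Type*} [EMetricSpace X] [SecondCountableTopology X]
    [MeasurableSpace X] [BorelSpace X] [EMetricSpace Y] [MeasurableSpace Y] [BorelSpace Y]
    {f : X → Y} {S : Set X} (hf : LocallyLipschitzOn S f) {d : ℝ} (hd : 0 ≤ d)
    (hS : μH[d] S = 0) : μH[d] (f '' S) = 0 := by
  obtain ⟨𝒱, h𝒱, rfl, hL⟩ := exists_countable_cover_lipschitzOnWith hf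
  rw [image_sUnion, measure_sUnion_null_iff (h𝒱.image _)]
  rintro _ ⟨V, hV, rfl⟩
  obtain ⟨L, hL⟩ := hL V hV
  have hle := hL.hausdorffMeasure_image_le hd
  rw [measure_mono_null (subset_sUnion_of_mem hV) hS, mul_zero] at hle
  exact nonpos_iff_eq_zero.1 hle

lemma locallyLipschitzOn_of_contDiffAt {E F : Type*} [NormedAddCommGroup E] [NormedSpace ℝ E]
    [NormedAddCommGroup F] [NormedSpace ℝ F] {f : E → F} {S : Set E}
    (hf : ∀ x ∈ S, ContDiffAt ℝ 1 f x) : LocallyLipschitzOn S f := by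
  intro x hx
  obtain ⟨L, V, hV, hL⟩ := (hf x hx).exists_lipschitzOnWith
  exact ⟨L, V, mem_nhdsWithin_of_mem_nhds hV, hL⟩

end Fibres

section UpperBound
variable {m : ℕ}

lemma contDiffAt_lineSlope {w : (Fin m → ℝ) × ℝ} (hw : w.2 ≠ 0) :
    ContDiffAt ℝ 1 lineSlope w :=
  (contDiffAt_snd.inv hw).smul contDiffAt_fst

lemma projAlong_eq_zero_iff {w : (Fin m → ℝ) × ℝ} (hw : w.2 ≠ 0) {u : Fin m → ℝ} :
    projAlong u w = 0 ↔ lineSlope w = u := by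
  rw [← norm_eq_zero, norm_projAlong_eq hw, mul_eq_zero, abs_eq_zero, or_iff_right hw,
    dist_eq_zero, eq_comm]

lemma ae_hausdorffMeasure_section_eq_zero {t : ℝ} (ht : 0 < t) {A : Set ((Fin m → ℝ) × ℝ)}
    (hA : μH[m + t] A = 0) (x : (Fin m → ℝ) × ℝ) :
    ∀ᵐ u : Fin m → ℝ, μH[t] (A ∩ {y | projAlong u y = projAlong u x}) = 0 := by
  set S := A ∩ {y | (y - x).2 ≠ 0}
  have hlip : LocallyLipschitzOn S fun y => lineSlope (y - x) :=
    locallyLipschitzOn_of_contDiffAt fun y hy =>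
      (contDiffAt_lineSlope hy.2).comp y (contDiffAt_id.sub contDiffAt_const)
  filter_upwards [ae_hausdorffMeasure_fiber_eq_zero_of_locallyLipschitzOn ht
    (measure_mono_null inter_subset_left hA) hlip] with u hu
  have := Measure.nullSingletonClass_hausdorff ((Fin m → ℝ) × ℝ) ht
  refine measure_mono_null ?_ (measure_union_null (measure_singleton x) hu)
  rintro y ⟨hyA, hy⟩
  have hyx : projAlong u (y - x) = 0 := by rw [projAlong_sub]; exact sub_eq_zero.2 hy
  by_cases h2 : (y - x).2 = 0
  · refine Or.inl (sub_eq_zero.1 (Prod.ext ?_ h2))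
    simpa [projAlong, h2] using hyx
  · exact Or.inr ⟨⟨hyA, h2⟩, (projAlong_eq_zero_iff h2).1 hyx⟩

lemma dimH_le_ofReal_of_forall_hausdorffMeasure_eq_zero {X : Type*} [EMetricSpace X]
    [MeasurableSpace X] [BorelSpace X] {S : Set X} {a : ℝ} (ha : 0 ≤ a)
    (hS : ∀ i : ℕ, μH[a + 1 / ((i : ℝ) + 1)] S = 0) : dimH S ≤ ENNReal.ofReal a := by
  have hlim : Tendsto (fun i : ℕ => ENNReal.ofReal (a + 1 / ((i : ℝ) + 1))) atTop
      (𝓝 (ENNReal.ofReal a)) :=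
    ENNReal.tendsto_ofReal (by simpa using tendsto_one_div_add_atTop_nhds_zero_nat.const_add a)
  refine ge_of_tendsto' hlim fun i => ?_
  refine dimH_le_of_hausdorffMeasure_ne_top (d := (a + 1 / ((i : ℝ) + 1)).toNNReal) ?_
  rw [Real.coe_toNNReal _ (by positivity), hS i]
  exact ENNReal.zero_ne_top

lemma exists_measurableSet_superset_dimH_le {X : Type*} [EMetricSpace X] [MeasurableSpace X]
    [BorelSpace X] {a : ℝ} (ha : 0 ≤ a) {B : Set X} (hB : ∀ t, a < t → μH[t] B = 0) :
    ∃ B' ⊇ B, MeasurableSet B' ∧ dimH B' ≤ ENNReal.ofReal a := by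
  refine ⟨⋂ i : ℕ, toMeasurable μH[a + 1 / ((i : ℝ) + 1)] B,
    subset_iInter fun i => subset_toMeasurable _ _,
    MeasurableSet.iInter fun i => measurableSet_toMeasurable _ _,
    dimH_le_ofReal_of_forall_hausdorffMeasure_eq_zero ha fun i => ?_⟩
  refine measure_mono_null (iInter_subset _ i) ?_
  rw [measure_toMeasurable]
  exact hB _ (lt_add_of_pos_right a Nat.one_div_pos_of_nat)

lemma ae_dimH_section_le {s : ℝ} (hs : (m : ℝ) ≤ s) {A : Set ((Fin m → ℝ) × ℝ)}
    (hA : μH[s] A ≠ ∞) (x : (Fin m → ℝ) × ℝ) :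
    ∀ᵐ u : Fin m → ℝ, dimH (A ∩ {y | projAlong u y = projAlong u x}) ≤ ENNReal.ofReal (s - m) := by
  have hnull (i : ℕ) : ∀ᵐ u : Fin m → ℝ,
      μH[s - m + 1 / ((i : ℝ) + 1)] (A ∩ {y | projAlong u y = projAlong u x}) = 0 := by
    have hi := Nat.one_div_pos_of_nat (α := ℝ) (n := i)
    refine ae_hausdorffMeasure_section_eq_zero (by linarith) ?_ x
    exact (Measure.hausdorffMeasure_zero_or_top (by linarith) A).resolve_right hA
  filter_upwards [ae_all_iff.2 hnull] with u hu
  exact dimH_le_ofReal_of_forall_hausdorffMeasure_eq_zero (sub_nonneg.2 hs) hu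

end UpperBound

section Slicing
variable {m : ℕ}

lemma hausdorffMeasure_setOf_snd_eq {s : ℝ} (hs : (m : ℝ) < s) (b : ℝ) :
    μH[s] {y : (Fin m → ℝ) × ℝ | y.2 = b} = 0 := by
  have himage : {y : (Fin m → ℝ) × ℝ | y.2 = b} = (fun v => (v, b)) '' univ := by
    ext ⟨v, r⟩
    simp [eq_comm]
  have hs0 : 0 ≤ s := m.cast_nonneg.trans hs.le
  lift s to ℝ≥0 using hs0
  refine hausdorffMeasure_of_dimH_lt ?_
  rw [himage]
  refine ((LipschitzWith.prodMk_right b).dimH_image_le _).trans_lt ?_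
  rw [Real.dimH_univ_pi_fin]
  exact_mod_cast hs

lemma exists_not_ae_dimH_section_lt {μ : Measure ((Fin m → ℝ) × ℝ)} [IsFiniteMeasure μ] {s : ℝ}
    (hs : (m : ℝ) < s) (hμ₀ : μ ≠ 0) (hμ : IsFrostman μ s) (hplane : ∀ b, μ {y | y.2 = b} = 0)
    {K : Set ((Fin m → ℝ) × ℝ)} (hK : IsCompact K) (hμK : ∀ᵐ y ∂μ, y ∈ K) :
    ∃ B : Set ((Fin m → ℝ) × ℝ), (∀ t, (m : ℝ) < t → μH[t] B = 0) ∧ ∀ x ∉ B,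
      ¬ ∀ᵐ u : Fin m → ℝ,
        dimH (K ∩ {y | projAlong u y = projAlong u x}) < ENNReal.ofReal (s - m) := by
  obtain ⟨σ, hσ, B₀, hB₀, hdensity⟩ :=
    exists_subseq_not_ae_liminf_lineDensity_eq_zero hs hμ₀ hμ hplane
  obtain ⟨τ, -, hτ, hτlim⟩ := exists_seq_strictMono_tendsto' (sub_pos.2 hs)
  choose B hB henergy using fun i => exists_ae_liminf_lineEnergy_ne_top (hτ i).1
    (by linarith [(hτ i).2]) hμ σ
  refine ⟨B₀ ∪ ⋃ i, B i, fun t ht => measure_union_null (hB₀ t ht)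
    (measure_iUnion_null fun i => hB i t ht), fun x hx hlt => ?_⟩
  simp only [mem_union, mem_iUnion, not_or, not_exists] at hx
  refine hdensity x hx.1 ?_
  rw [← ae_slopeMeasure] at hlt
  filter_upwards [hlt, ae_all_iff.2 fun i => henergy i x (hx.2 i)] with u hu_lt hu_energy
  by_contra hu_density
  exact hu_lt.not_ge (le_of_tendsto' (ENNReal.tendsto_ofReal hτlim) fun i =>
    ofReal_le_dimH_section (hτ i).1 hK hμK hσ hu_density (hu_energy i))

theorem exists_volume_dimH_section_eq_ne_zero {s : ℝ} (hs : (m : ℝ) < s)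
    {A : Set ((Fin m → ℝ) × ℝ)} (hA : MeasurableSet A) (h0 : μH[s] A ≠ 0) (h1 : μH[s] A ≠ ∞) :
    ∃ B : Set ((Fin m → ℝ) × ℝ), (∀ t, (m : ℝ) < t → μH[t] B = 0) ∧ ∀ x ∉ B,
      volume {u | dimH (A ∩ {y | projAlong u y = projAlong u x}) = ENNReal.ofReal (s - m)} ≠ 0 := by
  obtain ⟨K, hKA, hK, hK0, hfrostman⟩ :=
    exists_isCompact_isFrostman (m.cast_nonneg.trans hs.le) hA h0 h1
  have : IsFiniteMeasure (μH[s].restrict K : Measure ((Fin m → ℝ) × ℝ)) :=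
    isFiniteMeasure_restrict.2 (measure_ne_top_of_subset hKA h1)
  obtain ⟨B, hB, hlower⟩ := exists_not_ae_dimH_section_lt hs
    (by rwa [Ne, Measure.restrict_eq_zero]) hfrostman
    (fun b => Measure.absolutelyContinuous_of_le Measure.restrict_le_self
      (hausdorffMeasure_setOf_snd_eq hs b))
    hK (ae_restrict_mem hK.measurableSet)
  refine ⟨B, hB, fun x hx hnull => hlower x hx ?_⟩
  have hne : ∀ᵐ u : Fin m → ℝ,
      dimH (A ∩ {y | projAlong u y = projAlong u x}) ≠ ENNReal.ofReal (s - m) := by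
    simpa [ae_iff] using hnull
  filter_upwards [ae_dimH_section_le hs.le h1 x, hne] with u hle hne
  exact (dimH_mono (inter_subset_inter_left _ hKA)).trans_lt (lt_of_le_of_ne hle hne)

end Slicing

section Directions
variable {E : Type*} [NormedAddCommGroup E] [NormedSpace ℝ E] {m : ℕ}

lemma lineSlope_smul {a : ℝ} (ha : a ≠ 0) (w : (Fin m → ℝ) × ℝ) :
    lineSlope (a • w) = lineSlope w := by
  simp only [lineSlope, Prod.smul_fst, Prod.smul_snd, smul_eq_mul, mul_inv, smul_smul]
  congr 1
  field_simp

lemma exists_eq_add_smul_iff_projAlong_eq {w : (Fin m → ℝ) × ℝ} (hw : w.2 ≠ 0)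
    {x y : (Fin m → ℝ) × ℝ} :
    (∃ r : ℝ, y = x + r • w) ↔ projAlong (lineSlope w) y = projAlong (lineSlope w) x := by
  constructor
  · rintro ⟨r, rfl⟩
    simp only [projAlong, Prod.fst_add, Prod.snd_add, Prod.smul_fst, Prod.smul_snd, smul_eq_mul,
      add_smul, mul_smul, snd_smul_lineSlope hw]
    abel
  · intro h
    have hfst : y.1 - x.1 = (y.2 - x.2) • lineSlope w := by
      rw [sub_smul]; exact sub_eq_sub_iff_sub_eq_sub.1 h
    refine ⟨(y.2 - x.2) / w.2, eq_add_of_sub_eq' (Prod.ext ?_ ?_)⟩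
    · rw [Prod.fst_sub, hfst, Prod.smul_fst, div_eq_mul_inv, mul_smul, lineSlope]
    · rw [Prod.snd_sub, Prod.smul_snd, smul_eq_mul, div_mul_cancel₀ _ hw]

lemma dimH_inter_line_eq (L : E ≃L[ℝ] (Fin m → ℝ) × ℝ) (A : Set E) (x : E) {e : E}
    (he : (L e).2 ≠ 0) :
    dimH (A ∩ {y | ∃ r : ℝ, y = x + r • e}) =
      dimH (L '' A ∩ {y | projAlong (lineSlope (L e)) y = projAlong (lineSlope (L e)) (L x)}) := by
  have hline : {y | ∃ r : ℝ, y = x + r • e} =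
      L ⁻¹' {y | projAlong (lineSlope (L e)) y = projAlong (lineSlope (L e)) (L x)} := by
    ext y
    simp only [mem_preimage, mem_ofPred_eq, ← exists_eq_add_smul_iff_projAlong_eq he, ← map_smul,
      ← map_add, L.injective.eq_iff]
  rw [← L.dimH_image, hline, image_inter_preimage]

lemma exists_norm_eq_one_lineSlope_eq (L : E ≃L[ℝ] (Fin m → ℝ) × ℝ) (u : Fin m → ℝ) :
    ∃ e, ‖e‖ = 1 ∧ (L e).2 ≠ 0 ∧ lineSlope (L e) = u := by
  have hw : L.symm (u, 1) ≠ 0 := by simp [Prod.ext_iff]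
  refine ⟨‖L.symm (u, 1)‖⁻¹ • L.symm (u, 1), norm_smul_inv_norm (𝕜 := ℝ) hw, ?_, ?_⟩
  · simp [hw]
  · rw [map_smul, L.apply_symm_apply, lineSlope_smul (inv_ne_zero (norm_ne_zero_iff.2 hw))]
    simp [lineSlope]

variable [MeasurableSpace E] [BorelSpace E]

lemma hausdorffMeasure_image_eq_zero_iff {F : Type*} [NormedAddCommGroup F] [NormedSpace ℝ F]
    [MeasurableSpace F] [BorelSpace F] (L : E ≃L[ℝ] F) {d : ℝ} (hd : 0 ≤ d) {S : Set E} :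
    μH[d] (L '' S) = 0 ↔ μH[d] S = 0 := by
  constructor <;> intro h
  · have hle := L.symm.lipschitz.hausdorffMeasure_image_le hd (L '' S)
    rwa [h, mul_zero, L.symm_image_image, nonpos_iff_eq_zero] at hle
  · have hle := L.lipschitz.hausdorffMeasure_image_le hd S
    rwa [h, mul_zero, nonpos_iff_eq_zero] at hle

lemma volume_eq_zero_of_hausdorffMeasure_directions_eq_zero (L : E ≃L[ℝ] (Fin m → ℝ) × ℝ)
    {P : (Fin m → ℝ) → Prop}
    (hP : μH[m] {e | ‖e‖ = 1 ∧ (L e).2 ≠ 0 ∧ P (lineSlope (L e))} = 0) :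
    volume {u | P u} = 0 := by
  have : SecondCountableTopology E := L.toHomeomorph.secondCountableTopology
  have hlip : LocallyLipschitzOn {e | ‖e‖ = 1 ∧ (L e).2 ≠ 0 ∧ P (lineSlope (L e))}
      fun e => lineSlope (L e) :=
    locallyLipschitzOn_of_contDiffAt fun e he =>
      (contDiffAt_lineSlope he.2.1).comp e L.contDiff.contDiffAt
  have hvolume : (μH[m] : Measure (Fin m → ℝ)) = volume := by
    simpa using hausdorffMeasure_pi_real (ι := Fin m)
  rw [← hvolume]
  refine measure_mono_null (fun u hu => ?_)
    (hausdorffMeasure_image_eq_zero hlip m.cast_nonneg hP)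
  obtain ⟨e, he_norm, he, rfl⟩ := exists_norm_eq_one_lineSlope_eq L u
  exact ⟨e, ⟨he_norm, he, hu⟩, rfl⟩

end Directions

end LineSections

theorem stmt_13_general {E : Type*} [NormedAddCommGroup E] [NormedSpace ℝ E] [MeasurableSpace E]
    [BorelSpace E] {m : ℕ} (hE : Module.finrank ℝ E = m + 1) {s : ℝ} (hs : (m : ℝ) < s) {A : Set E}
    (hA : MeasurableSet A) (h0 : 0 < μH[s] A) (h1 : μH[s] A < ∞) :
    ∃ B : Set E, MeasurableSet B ∧ dimH B ≤ m ∧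
      ∀ x ∉ B, 0 < μH[m] {e : E | ‖e‖ = 1 ∧
        dimH (A ∩ {y | ∃ r : ℝ, y = x + r • e}) = ENNReal.ofReal (s - m)} := by
  have : FiniteDimensional ℝ E := .of_finrank_pos (by omega)
  let L : E ≃L[ℝ] (Fin m → ℝ) × ℝ := .ofFinrankEq (by simp [hE])
  have hs0 : 0 ≤ s := m.cast_nonneg.trans hs.le
  have hLA : MeasurableSet (L '' A) := L.toHomeomorph.measurableEmbedding.measurableSet_image.2 hA
  have hLA0 : μH[s] (L '' A) ≠ 0 :=
    (LineSections.hausdorffMeasure_image_eq_zero_iff L hs0).not.2 h0.ne'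
  have hLA1 : μH[s] (L '' A) ≠ ∞ := ne_top_of_le_ne_top (ENNReal.mul_ne_top (by finiteness) h1.ne)
    (L.lipschitz.hausdorffMeasure_image_le hs0 A)
  obtain ⟨B, hB, hx⟩ := LineSections.exists_volume_dimH_section_eq_ne_zero hs hLA hLA0 hLA1
  obtain ⟨B', hBB', hB'_meas, hB'_dim⟩ := LineSections.exists_measurableSet_superset_dimH_le
    m.cast_nonneg (B := L.symm '' B) fun t ht =>
      (LineSections.hausdorffMeasure_image_eq_zero_iff _ (m.cast_nonneg.trans ht.le)).2 (hB t ht)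
  refine ⟨B', hB'_meas, by simpa using hB'_dim, fun x hxB => pos_iff_ne_zero.2 fun hnull => ?_⟩
  have hLx : L x ∉ B := fun h => hxB (hBB' ⟨L x, h, L.symm_apply_apply x⟩)
  refine hx (L x) hLx (LineSections.volume_eq_zero_of_hausdorffMeasure_directions_eq_zero L
    (measure_mono_null ?_ hnull))
  rintro e ⟨he_norm, he, hdim⟩
  exact ⟨he_norm, (LineSections.dimH_inter_line_eq L A x he).trans hdim⟩

theorem stmt_13 (n : ℕ) (hn : 2 ≤ n) (s : ℝ) (hs1 : (n : ℝ) - 1 < s) (hs2 : s ≤ n)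
    (A : Set (EuclideanSpace ℝ (Fin n))) (hA : MeasurableSet A)
    (h0 : 0 < μH[s] A) (h1 : μH[s] A < ∞) :
    ∃ B : Set (EuclideanSpace ℝ (Fin n)), MeasurableSet B ∧
      dimH B ≤ (n : ℝ≥0∞) - 1 ∧
      ∀ x ∉ B, 0 < μH[(n : ℝ) - 1]
        {e : EuclideanSpace ℝ (Fin n) | ‖e‖ = 1 ∧
          dimH (A ∩ {y | ∃ r : ℝ, y = x + r • e}) =
            ENNReal.ofReal (s - ((n : ℝ) - 1))} := by
  obtain ⟨m, rfl⟩ := Nat.exists_eq_add_of_le' (one_le_two.trans hn)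
  have hreal : ((m + 1 : ℕ) : ℝ) - 1 = m := by push_cast; ring
  have hennreal : ((m + 1 : ℕ) : ℝ≥0∞) - 1 = m := by simp
  rw [hreal] at hs1
  simpa only [hreal, hennreal] using stmt_13_general (by simp) hs1 hA h0 h1
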